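/- Let (𝐗,𝐝) = {(X_1,d_1),…,(X_Q,d_Q)} be smooth vector fields on a neighborhood Ω of 0 in ℝ^n, each with a ν-parameter degree, such that each X_l has finite C^m(Ω) norm for every m, and [X_l,X_k] = Σ_{i : d_i ≤ d_l+d_k coordinatewise} c^i_{l,k} X_i on Ω with coefficients c^i_{l,k} smooth on a neighborhood of the closure of Ω. Let ℱ ⊆ (𝐗,𝐝) and suppose there exist ξ_1 > 0 and a neighborhood U ⊆ Ω of 0 such that both ℱ and (𝐗,𝐝) satisfy 𝒞(x,ξ⃗_1,Ω) for all x ∈ U, and suppose at least one element of (𝐗,𝐝) is not controlled by ℱ. Then for every ε ∈ (0,1], ξ ∈ (0,1], and every neighborhood U′ ⊆ U of 0, there exist x ∈ U′ and δ ∈ [0,ξ]^ν with n₀(x,δ) := rank(δ𝐗)(x) > 0 such that either n₀(x,δ) > |ℱ|, or n₀(x,δ) ≤ |ℱ| and |det_{n₀×n₀}(δ𝐗)_ℱ(x)|_∞ < ε·|det_{n₀×n₀}(δ𝐗)(x)|_∞. -/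

import Mathlib

open MeasureTheory Metric Filter Set
open scoped ENNReal NNReal Topology

noncomputable section

namespace Zhang

/-- `ℝ^n` with the Euclidean norm. -/
abbrev Euc (n : ℕ) := EuclideanSpace ℝ (Fin n)

/-- Vector fields on `ℝ^n` (as everywhere-defined maps). -/
abbrev VF (n : ℕ) := Euc n → Euc n

/-- `ν`-parameter degrees. -/
abbrev Deg (ν : ℕ) := Fin ν → ℝ

variable {N ν n q : ℕ}

/-- Admissible multi-parameter dilation data `e = {e_1,…,e_N} ⊆ [0,∞)^ν`. -/
def AdmissibleE (e : Fin N → Fin ν → ℝ) : Prop :=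
  (∀ i μ, 0 ≤ e i μ) ∧ (∀ i, ∃ μ, e i μ ≠ 0) ∧ (∀ μ, ∃ i, e i μ ≠ 0)

/-- `δ^d = ∏_μ δ_μ^{d_μ}` (real exponents). -/
def dpow (δ d : Fin ν → ℝ) : ℝ := ∏ μ, δ μ ^ d μ

/-- The multi-parameter dilation `δ t = (δ^{e_1} t_1, …, δ^{e_N} t_N)`. -/
def dilate (e : Fin N → Fin ν → ℝ) (δ : Fin ν → ℝ) (t : Euc N) : Euc N :=
  (EuclideanSpace.equiv (Fin N) ℝ).symm fun i => dpow δ (e i) * t i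

/-- `ς^{(δ)}(t) = δ^{e_1+⋯+e_N} ς(δ t)`. -/
def scaled (e : Fin N → Fin ν → ℝ) (ς : Euc N → ℝ) (δ : Fin ν → ℝ) : Euc N → ℝ :=
  fun t => (∏ i, dpow δ (e i)) * ς (dilate e δ t)

/-- `2^k = (2^{k_1},…,2^{k_ν})`. -/
def twoPow (k : Fin ν → ℕ) : Fin ν → ℝ := fun μ => 2 ^ k μ

/-- The (global) `C^m` supremum norm of a function. -/
def CmSupNorm {E F : Type*} [NormedAddCommGroup E] [NormedSpace ℝ E]
    [NormedAddCommGroup F] [NormedSpace ℝ F] (m : ℕ) (f : E → F) : ℝ :=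
  ∑ j ∈ Finset.range (m + 1), ⨆ t, ‖iteratedFDeriv ℝ j f t‖

/-- The `C^m` supremum norm of a function on a set. -/
def CmSupNormOn {E F : Type*} [NormedAddCommGroup E] [NormedSpace ℝ E]
    [NormedAddCommGroup F] [NormedSpace ℝ F] (m : ℕ) (s : Set E) (f : E → F) : ℝ :=
  ∑ j ∈ Finset.range (m + 1), ⨆ t ∈ s, ‖iteratedFDerivWithin ℝ j f s t‖

/-- The cancellation condition: the integral of `g` in the coordinates `t_i` with
`e_i^μ ≠ 0` vanishes identically as a function of the remaining coordinates. -/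
def CancelCond (e : Fin N → Fin ν → ℝ) (μ : Fin ν) (g : Euc N → ℝ) : Prop :=
  ∀ t : Fin N → ℝ,
    haveI : DecidablePred fun i : Fin N => e i μ ≠ 0 := Classical.decPred _
    (∫ s : {i : Fin N // e i μ ≠ 0} → ℝ,
        g ((EuclideanSpace.equiv (Fin N) ℝ).symm fun i =>
          if h : e i μ ≠ 0 then s ⟨i, h⟩ else t i)) = 0

/-- Kernel data for the class `𝒦(N,e,a,ν)`: a sequence `{ς_k}_{k∈ℕ^ν}` bounded in
`C_c^∞(B^N(a))` satisfying the cancellation conditions. -/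
def IsKernelSeq (e : Fin N → Fin ν → ℝ) (a : ℝ) (ς : (Fin ν → ℕ) → Euc N → ℝ) : Prop :=
  (∀ k, ContDiff ℝ (⊤ : ℕ∞) (ς k)) ∧
  (∀ k, tsupport (ς k) ⊆ ball (0 : Euc N) a) ∧
  (∀ m, ∃ C : ℝ, ∀ k, CmSupNorm m (ς k) ≤ C) ∧
  (∀ k μ, k μ ≠ 0 → CancelCond e μ (ς k))

/-- Membership in the Fréchet space `𝒦̄(N,e,a,ν)` (closed ball support). -/
def MemKbar (e : Fin N → Fin ν → ℝ) (a : ℝ) (ς : (Fin ν → ℕ) → Euc N → ℝ) : Prop :=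
  (∀ k, ContDiff ℝ (⊤ : ℕ∞) (ς k)) ∧
  (∀ k, tsupport (ς k) ⊆ closedBall (0 : Euc N) a) ∧
  (∀ m, ∃ C : ℝ, ∀ k, CmSupNorm m (ς k) ≤ C) ∧
  (∀ k μ, k μ ≠ 0 → CancelCond e μ (ς k))

/-- The seminorm `‖{ς_k}‖_m = sup_k ‖ς_k‖_{C^m}` of `𝒦̄(N,e,a,ν)`. -/
def seqSeminorm (m : ℕ) (ς : (Fin ν → ℕ) → Euc N → ℝ) : ℝ :=
  ⨆ k, CmSupNorm m (ς k)

/-- The multi-indices `k ∈ ℕ^ν` with all coordinates `≤ M`. -/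
def trunc (ν M : ℕ) : Finset (Fin ν → ℕ) :=
  Finset.image (fun k : Fin ν → Fin (M + 1) => fun μ => (k μ : ℕ)) Finset.univ

/-- The partial-sum operators `f ↦ ψ(x) Σ_{|k|≤M} ∫ f(γ_t(x)) ς_k^{(2^k)}(t) dt`. -/
def partialOp (e : Fin N → Fin ν → ℝ) (γ : Euc N → Euc n → Euc n) (ψ : Euc n → ℝ)
    (ς : (Fin ν → ℕ) → Euc N → ℝ) (M : ℕ) (f : Euc n → ℝ) : Euc n → ℝ :=
  fun x => ψ x * ∑ k ∈ trunc ν M, ∫ t : Euc N, f (γ t x) * scaled e (ς k) (twoPow k) t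

/-- `T` is bounded on `L^p`: the partial-sum operators are bounded uniformly in `M`. -/
def OpBounded (p : ℝ) (e : Fin N → Fin ν → ℝ) (γ : Euc N → Euc n → Euc n)
    (ψ : Euc n → ℝ) (ς : (Fin ν → ℕ) → Euc N → ℝ) : Prop :=
  ∃ C : ℝ≥0, ∀ M : ℕ, ∀ f : Euc n → ℝ, ContDiff ℝ (⊤ : ℕ∞) f → HasCompactSupport f →
    eLpNorm (partialOp e γ ψ ς M f) (ENNReal.ofReal p) volume ≤
      C * eLpNorm f (ENNReal.ofReal p) volume

/-- All operators with small `ψ` and small kernels in `𝒦(N,e,a,ν)` are `L^p` bounded. -/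
def AllOpsBounded (p : ℝ) (e : Fin N → Fin ν → ℝ) (γ : Euc N → Euc n → Euc n) : Prop :=
  ∃ ε a : ℝ, 0 < ε ∧ 0 < a ∧
    ∀ ψ : Euc n → ℝ, ContDiff ℝ (⊤ : ℕ∞) ψ → HasCompactSupport ψ →
      tsupport ψ ⊆ ball (0 : Euc n) ε →
      ∀ ς : (Fin ν → ℕ) → Euc N → ℝ, IsKernelSeq e a ς → OpBounded p e γ ψ ς

/-! ### Vector fields, brackets, Carnot–Carathéodory geometry -/

/-- The Lie bracket of two vector fields. -/
def lieBracket (X Y : VF n) : VF n := fun x => fderiv ℝ Y x (X x) - fderiv ℝ X x (Y x)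

/-- `ℒ(S)`: the smallest set of (vector field, degree) pairs containing `S` and
closed under Lie brackets (adding degrees). -/
inductive LieGen (S : Set (VF n × Deg ν)) : VF n × Deg ν → Prop
  | base {P : VF n × Deg ν} : P ∈ S → LieGen S P
  | bracket {X Y : VF n} {d d' : Deg ν} : LieGen S (X, d) → LieGen S (Y, d') →
      LieGen S (lieBracket X Y, d + d')

def lieSpan (S : Set (VF n × Deg ν)) : Set (VF n × Deg ν) := {P | LieGen S P}

def unitCube (ν : ℕ) : Set (Fin ν → ℝ) := {δ | ∀ μ, 0 ≤ δ μ ∧ δ μ ≤ 1}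

def vecConst (ν : ℕ) (ξ : ℝ) : Fin ν → ℝ := fun _ => ξ

/-- `a` is a measurable control with `‖Σ_l |a_l|²‖_{L^∞[0,1]} < 1`. -/
def IsSubunit {ι : Type*} [Fintype ι] (a : ℝ → ι → ℝ) : Prop :=
  (∀ l, Measurable fun s => a s l) ∧
  ∃ c : ℝ, c < 1 ∧ ∀ᵐ s ∂(volume.restrict (Set.Icc (0 : ℝ) 1)), ∑ l, a s l ^ 2 ≤ c

/-- `g` is an absolutely continuous solution of `g' = Σ_l a_l δ^{d_l} X_l(g)`, `g(0)=x`,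
in integral form. -/
def SolvesODE {ι : Type*} [Fintype ι] (X : ι → VF n) (d : ι → Deg ν) (δ : Fin ν → ℝ)
    (a : ℝ → ι → ℝ) (x : Euc n) (g : ℝ → Euc n) : Prop :=
  g 0 = x ∧ ∀ u ∈ Set.Icc (0 : ℝ) 1,
    g u = x + ∫ s in (0 : ℝ)..u, ∑ l, a s l • dpow δ (d l) • X l (g s)

/-- The multi-parameter Carnot–Carathéodory ball `B_{(X,d)}(x,δ)` inside `Ω`. -/
def CCBall {ι : Type*} [Fintype ι] (X : ι → VF n) (d : ι → Deg ν) (Ω : Set (Euc n))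
    (x : Euc n) (δ : Fin ν → ℝ) : Set (Euc n) :=
  {y | ∃ (g : ℝ → Euc n) (a : ℝ → ι → ℝ), IsSubunit a ∧
      (∀ u ∈ Set.Icc (0 : ℝ) 1, g u ∈ Ω) ∧ SolvesODE X d δ a x g ∧ g 1 = y}

/-- `(X,d)` satisfies `𝒞(x,δ,Ω)`. -/
def SatC {ι : Type*} [Fintype ι] (X : ι → VF n) (d : ι → Deg ν) (x : Euc n)
    (δ : Fin ν → ℝ) (Ω : Set (Euc n)) : Prop :=
  ∀ a : ℝ → ι → ℝ, IsSubunit a →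
    ∃ g : ℝ → Euc n, (∀ u ∈ Set.Icc (0 : ℝ) 1, g u ∈ Ω) ∧ SolvesODE X d δ a x g

/-- The derivation of a scalar function along a vector field. -/
def derivAlong (Y : VF n) (f : Euc n → ℝ) : Euc n → ℝ := fun x => fderiv ℝ f x (Y x)

/-- `(δX)^α f`: iterated derivations indexed by the ordered multi-index `α`. -/
def derivList {ι : Type*} (X : ι → VF n) (w : ι → ℝ) (α : List ι) (f : Euc n → ℝ) :
    Euc n → ℝ :=
  α.foldr (fun l g => derivAlong (fun x => w l • X l x) g) f

/-- `(X,d)` controls `(X₀,d₀)` on `U` with parameter `ξ₁` (ambient `Ω`). -/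
def ControlsOn {ι : Type*} [Fintype ι] (X : ι → VF n) (d : ι → Deg ν)
    (Ω U : Set (Euc n)) (ξ₁ : ℝ) (X₀ : VF n) (d₀ : Deg ν) : Prop :=
  (∀ x ∈ U, SatC X d x (vecConst ν ξ₁) Ω) ∧
  ∃ c : Euc n → (Fin ν → ℝ) → ι → Euc n → ℝ,
    (∀ x ∈ U, ∀ δ ∈ unitCube ν, ∀ y ∈ CCBall X d Ω x (fun μ => ξ₁ * δ μ),
      dpow δ d₀ • X₀ y = ∑ l, c x δ l y • dpow δ (d l) • X l y) ∧
    (∀ x ∈ U, ∀ δ ∈ unitCube ν, ∀ l, ∀ α : List ι,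
      ContinuousOn (derivList X (fun l' => dpow δ (d l')) α (c x δ l))
        (CCBall X d Ω x (fun μ => ξ₁ * δ μ))) ∧
    (∀ m : ℕ, ∃ C : ℝ, ∀ x ∈ U, ∀ δ ∈ unitCube ν, ∀ l, ∀ α : List ι, α.length ≤ m →
      ∀ y ∈ CCBall X d Ω x (fun μ => ξ₁ * δ μ),
        |derivList X (fun l' => dpow δ (d l')) α (c x δ l) y| ≤ C)

/-- `(X,d)` controls `(X₀,d₀)` (some `U`, `ξ₁`), ambient `Ω`. -/
def ControlsPair {ι : Type*} [Fintype ι] (X : ι → VF n) (d : ι → Deg ν)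
    (Ω : Set (Euc n)) (X₀ : VF n) (d₀ : Deg ν) : Prop :=
  ∃ (U : Set (Euc n)) (ξ₁ : ℝ), IsOpen U ∧ (0 : Euc n) ∈ U ∧ U ⊆ Ω ∧ 0 < ξ₁ ∧
    ControlsOn X d Ω U ξ₁ X₀ d₀

/-- A finite set of pairs controls a pair (ambient neighborhood existentially quantified). -/
def FinsetControls (F : Finset (VF n × Deg ν)) (P : VF n × Deg ν) : Prop :=
  ∃ Ω : Set (Euc n), IsOpen Ω ∧ (0 : Euc n) ∈ Ω ∧
    ControlsPair (fun l : F => (l : VF n × Deg ν).1) (fun l : F => (l : VF n × Deg ν).2)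
      Ω P.1 P.2

/-- A set `S` of pairs controls a set `T`. -/
def SetControls (S T : Set (VF n × Deg ν)) : Prop :=
  ∃ F : Finset (VF n × Deg ν), ↑F ⊆ S ∧ ∀ P ∈ S ∪ T, FinsetControls F P

/-! ### Degrees, Taylor coefficients, exponential coefficients -/

def degMulti (e : Fin N → Fin ν → ℝ) (α : Fin N → ℕ) : Fin ν → ℝ :=
  fun μ => ∑ i, (α i : ℝ) * e i μ

/-- A degree is pure if it has exactly one nonzero coordinate. -/
def IsPureDeg (dg : Fin ν → ℝ) : Prop := ∃! μ, dg μ ≠ 0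

/-- `t^α`. -/
def monomial (α : Fin N → ℕ) (t : Euc N) : ℝ := ∏ i, t i ^ α i

/-- The multi-indices `α` with `|α| < M`. -/
def multiIdxLt (N M : ℕ) : Finset (Fin N → ℕ) :=
  (trunc N M).filter fun α => ∑ i, α i < M

/-- `X` is the family of Taylor coefficient vector fields of `W` at `t = 0`, on `U`. -/
def IsTaylorFieldOf (W : Euc N → Euc n → Euc n) (U : Set (Euc n))
    (X : (Fin N → ℕ) → VF n) : Prop :=
  X 0 = 0 ∧ (∀ α, ContDiffOn ℝ (⊤ : ℕ∞) (X α) U) ∧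
  ∀ M : ℕ, ∃ C ε : ℝ, 0 < ε ∧ ∀ t ∈ ball (0 : Euc N) ε, ∀ x ∈ U,
    ‖W t x - ∑ α ∈ multiIdxLt N M, monomial α t • X α x‖ ≤ C * ‖t‖ ^ M

/-- `W(t,x) = (d/dε)|_{ε=1} γ_{εt}(γ_t⁻¹(x))` on `B^N(ρ) × U`. -/
def IsWFor (γ : Euc N → Euc n → Euc n) (ρ : ℝ) (U : Set (Euc n))
    (W : Euc N → Euc n → Euc n) : Prop :=
  ∃ γinv : Euc N → Euc n → Euc n,
    (∀ t ∈ ball (0 : Euc N) ρ, ∀ x ∈ U, γ t (γinv t x) = x ∧ γinv t (γ t x) = x) ∧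
    ∀ t ∈ ball (0 : Euc N) ρ, ∀ x ∈ U,
      HasDerivAt (fun ε : ℝ => γ (ε • t) (γinv t x)) (W t x) 1

/-- `y` is the time-one flow of the vector field `V` from `x`. -/
def FlowsTo (V : VF n) (x y : Euc n) : Prop :=
  ∃ φ : ℝ → Euc n, φ 0 = x ∧ φ 1 = y ∧ ∀ s ∈ Set.Icc (0 : ℝ) 1, HasDerivAt φ (V (φ s)) s

/-- `Xh` is the family of exponential coefficient vector fields of `γ`:
`γ_t(x) = e^{Σ_{0<|α|<M} t^α X̂_α} x + O(|t|^M)` for every `M`. -/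
def IsExpFieldsFor (γ : Euc N → Euc n → Euc n) (U : Set (Euc n))
    (Xh : (Fin N → ℕ) → VF n) : Prop :=
  Xh 0 = 0 ∧ (∀ α, ContDiffOn ℝ (⊤ : ℕ∞) (Xh α) U) ∧
  ∀ M : ℕ, ∃ C ε : ℝ, 0 < ε ∧ ∀ t ∈ ball (0 : Euc N) ε, ∀ x ∈ U,
    ∃ y : Euc n, FlowsTo (fun z => ∑ α ∈ multiIdxLt N M, monomial α t • Xh α z) x y ∧
      ‖γ t x - y‖ ≤ C * ‖t‖ ^ M

/-- The pure power set `𝒫` of a family of coefficient fields. -/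
def pureSet (e : Fin N → Fin ν → ℝ) (X : (Fin N → ℕ) → VF n) : Set (VF n × Deg ν) :=
  {P | ∃ α : Fin N → ℕ, α ≠ 0 ∧ IsPureDeg (degMulti e α) ∧ P = (X α, degMulti e α)}

/-- The nonpure power set `𝒩` of a family of coefficient fields. -/
def nonpureSet (e : Fin N → Fin ν → ℝ) (X : (Fin N → ℕ) → VF n) : Set (VF n × Deg ν) :=
  {P | ∃ α : Fin N → ℕ, α ≠ 0 ∧ ¬ IsPureDeg (degMulti e α) ∧ P = (X α, degMulti e α)}

/-! ### Strong control -/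

/-- `(X,d)` strongly controls `(X₀,d₀)`. -/
def StrongControlsOn {ι : Type*} [Fintype ι] (X : ι → VF n) (d : ι → Deg ν)
    (X₀ : VF n) (d₀ : Deg ν) : Prop :=
  ∃ (U V : Set (Euc n)) (c : ι → Euc n → ℝ),
    IsOpen U ∧ (0 : Euc n) ∈ U ∧ IsOpen V ∧ closure U ⊆ V ∧
    (∀ l, ContDiffOn ℝ (⊤ : ℕ∞) (c l) V) ∧
    (∀ l, ¬ (∀ μ, d l μ ≤ d₀ μ) → c l = 0) ∧
    (∀ x ∈ U, X₀ x = ∑ l, c l x • X l x)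

/-- A finite set of pairs strongly controls a pair. -/
def FinsetStrongControls (F : Finset (VF n × Deg ν)) (P : VF n × Deg ν) : Prop :=
  StrongControlsOn (fun l : F => (l : VF n × Deg ν).1) (fun l : F => (l : VF n × Deg ν).2)
    P.1 P.2

/-- `(X,d)` strongly controls `W(t,x)`. -/
def StrongControlsW {ι : Type*} [Fintype ι] (X : ι → VF n) (d : ι → Deg ν)
    (e : Fin N → Fin ν → ℝ) (W : Euc N → Euc n → Euc n) : Prop :=
  ∃ (ρ' : ℝ) (U : Set (Euc n)) (V : Set (Euc N × Euc n)) (A : Finset (Fin N → ℕ))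
    (c : ι → (Fin N → ℕ) → Euc N → Euc n → ℝ),
    0 < ρ' ∧ IsOpen U ∧ (0 : Euc n) ∈ U ∧ IsOpen V ∧
    closure (ball (0 : Euc N) ρ' ×ˢ U) ⊆ V ∧
    (∀ l α, ContDiffOn ℝ (⊤ : ℕ∞) (fun p : Euc N × Euc n => c l α p.1 p.2) V) ∧
    (∀ l α, degMulti e α ≠ d l → c l α = 0) ∧
    (∀ t ∈ ball (0 : Euc N) ρ', ∀ x ∈ U,
      W t x = ∑ l, ∑ α ∈ A, (c l α t x * monomial α t) • X l x)

/-- A finite set of pairs strongly controls `W`. -/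
def FinsetStrongControlsW (F : Finset (VF n × Deg ν)) (e : Fin N → Fin ν → ℝ)
    (W : Euc N → Euc n → Euc n) : Prop :=
  StrongControlsW (fun l : F => (l : VF n × Deg ν).1) (fun l : F => (l : VF n × Deg ν).2)
    e W

/-! ### Control of `W` -/

/-- `∂_{t_i}` applied to a function of `(t,u)`. -/
def derivTAlong (i : Fin N) (f : Euc N → Euc n → ℝ) : Euc N → Euc n → ℝ :=
  fun t u => fderiv ℝ (fun s => f s u) t (EuclideanSpace.single i (1 : ℝ))

/-- Iterated `t`-partials indexed by an ordered multi-index. -/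
def derivTList (β : List (Fin N)) (f : Euc N → Euc n → ℝ) : Euc N → Euc n → ℝ :=
  β.foldr derivTAlong f

/-- Iterated `u`-derivations along scaled vector fields. -/
def derivUList {ι : Type*} (X : ι → VF n) (w : ι → ℝ) (β : List ι)
    (f : Euc N → Euc n → ℝ) : Euc N → Euc n → ℝ :=
  fun t => derivList X w β (f t)

/-- `(X,d)` controls `W` on `U` for `t ∈ B^N(ρ')` with parameter `ξ₁` (ambient `Ω`). -/
def ControlsWOn {ι : Type*} [Fintype ι] (X : ι → VF n) (d : ι → Deg ν)
    (e : Fin N → Fin ν → ℝ) (Ω U : Set (Euc n)) (ρ' ξ₁ : ℝ)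
    (W : Euc N → Euc n → Euc n) : Prop :=
  (∀ x ∈ U, SatC X d x (vecConst ν ξ₁) Ω) ∧
  ∃ c : Euc n → (Fin ν → ℝ) → ι → Euc N → Euc n → ℝ,
    (∀ x ∈ U, ∀ δ ∈ unitCube ν, ∀ t ∈ ball (0 : Euc N) ρ',
      ∀ u ∈ CCBall X d Ω x (fun μ => ξ₁ * δ μ),
        W (dilate e δ t) u = ∑ l, c x δ l t u • dpow δ (d l) • X l u) ∧
    (∀ x ∈ U, ∀ δ ∈ unitCube ν, ∀ l, ∀ β' : List (Fin N), ∀ β : List ι,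
      ContinuousOn
        (fun p : Euc N × Euc n =>
          derivTList β' (derivUList X (fun l' => dpow δ (d l')) β (c x δ l)) p.1 p.2)
        (ball (0 : Euc N) ρ' ×ˢ CCBall X d Ω x (fun μ => ξ₁ * δ μ))) ∧
    (∀ m : ℕ, ∃ C : ℝ, ∀ x ∈ U, ∀ δ ∈ unitCube ν, ∀ l, ∀ β' : List (Fin N), ∀ β : List ι,
      β'.length + β.length ≤ m → ∀ t ∈ ball (0 : Euc N) ρ',
        ∀ u ∈ CCBall X d Ω x (fun μ => ξ₁ * δ μ),
          |derivTList β' (derivUList X (fun l' => dpow δ (d l')) β (c x δ l)) t u| ≤ C)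

/-- `(X,d)` controls `W` (some `ρ' ≤ ρ`, `ξ₁`, `U`), ambient `Ω`. -/
def ControlsW {ι : Type*} [Fintype ι] (X : ι → VF n) (d : ι → Deg ν)
    (e : Fin N → Fin ν → ℝ) (Ω : Set (Euc n)) (ρ : ℝ)
    (W : Euc N → Euc n → Euc n) : Prop :=
  ∃ (ρ' ξ₁ : ℝ) (U : Set (Euc n)), 0 < ρ' ∧ ρ' ≤ ρ ∧ 0 < ξ₁ ∧ IsOpen U ∧
    (0 : Euc n) ∈ U ∧ U ⊆ Ω ∧ ControlsWOn X d e Ω U ρ' ξ₁ W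

end Zhang

open Zhang

/-- The matrix `δ𝐗(x)` whose `l`-th column is `δ^{d_l} X_l(x)`. -/
def scaledMat {ν n Q : ℕ} (X : Fin Q → VF n) (d : Fin Q → Deg ν) (δ : Fin ν → ℝ)
    (x : Euc n) : Matrix (Fin n) (Fin Q) ℝ :=
  fun i l => dpow δ (d l) * (X l x) i

/-- `|det_{r×r}(δ𝐗)(x)|_∞`: the largest absolute value of an `r × r` minor. -/
def maxMinor {ν n Q : ℕ} (X : Fin Q → VF n) (d : Fin Q → Deg ν) (δ : Fin ν → ℝ)
    (x : Euc n) (r : ℕ) : ℝ :=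
  ⨆ I : Fin r → Fin n, ⨆ J : Fin r → Fin Q, |((scaledMat X d δ x).submatrix I J).det|

/-- `|det_{r×r}(δ𝐗)_ℱ(x)|_∞`: minors using only columns from `F`. -/
def maxMinorSub {ν n Q : ℕ} (X : Fin Q → VF n) (d : Fin Q → Deg ν) (δ : Fin ν → ℝ)
    (x : Euc n) (F : Finset (Fin Q)) (r : ℕ) : ℝ :=
  ⨆ I : Fin r → Fin n, ⨆ J : Fin r → F,
    |((scaledMat X d δ x).submatrix I fun j => (J j : Fin Q)).det|

/-- The right-hand side of the control system with controls `a` and weights `b`, along `g`. -/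
def controlRhs {n : ℕ} {ι : Type*} [Fintype ι] (X : ι → VF n) (b : ι → ℝ) (a : ℝ → ι → ℝ)
    (g : ℝ → Euc n) : ℝ → Euc n :=
  fun s => ∑ l, a s l • b l • X l (g s)

lemma Zhang.IsSubunit.ae_abs_le_one {ι : Type*} [Fintype ι] {a : ℝ → ι → ℝ} (ha : IsSubunit a) :
    ∀ᵐ s ∂(volume.restrict (Icc (0 : ℝ) 1)), ∀ l, |a s l| ≤ 1 := by
  obtain ⟨-, c, hc, h⟩ := ha
  filter_upwards [h] with s hs l
  have h1 : a s l ^ 2 ≤ ∑ l, a s l ^ 2 :=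
    Finset.single_le_sum (f := fun l => a s l ^ 2) (fun i _ => sq_nonneg _) (Finset.mem_univ l)
  rw [← sq_le_one_iff_abs_le_one]
  linarith

lemma norm_controlRhs_le {n : ℕ} {ι : Type*} [Fintype ι] {X : ι → VF n} {b : ι → ℝ}
    (hb : ∀ l, 0 ≤ b l) {a : ℝ → ι → ℝ} {g : ℝ → Euc n} {M s : ℝ}
    (ha : ∀ l, |a s l| ≤ 1) (hM : ∀ l, ‖X l (g s)‖ ≤ M) :
    ‖controlRhs X b a g s‖ ≤ ∑ l, b l * M := by
  refine (norm_sum_le _ _).trans (Finset.sum_le_sum fun l _ => ?_)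
  rw [norm_smul, norm_smul, Real.norm_eq_abs, Real.norm_eq_abs, abs_of_nonneg (hb l)]
  have h1 := mul_le_mul_of_nonneg_left (hM l) (hb l)
  have h2 : 0 ≤ b l * ‖X l (g s)‖ := mul_nonneg (hb l) (norm_nonneg _)
  calc |a s l| * (b l * ‖X l (g s)‖) ≤ 1 * (b l * ‖X l (g s)‖) :=
        mul_le_mul_of_nonneg_right (ha l) h2
    _ ≤ b l * M := by linarith

/-- A slow integral curve does not leave a ball around its starting point. -/
lemma integralCurve_mem_closedBall {n : ℕ} {ι : Type*} [Fintype ι] {X : ι → VF n} {b : ι → ℝ}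
    (hb : ∀ l, 0 ≤ b l) {a : ℝ → ι → ℝ}
    (ha : ∀ᵐ s ∂(volume.restrict (Icc (0 : ℝ) 1)), ∀ l, |a s l| ≤ 1)
    {g : ℝ → Euc n} {x : Euc n} (hint : IntervalIntegrable (controlRhs X b a g) volume 0 1)
    (hg : ∀ u ∈ Icc (0 : ℝ) 1, g u = x + ∫ s in (0 : ℝ)..u, controlRhs X b a g s)
    {ρ M : ℝ} (hρ : 0 ≤ ρ) (hM : ∀ l, ∀ y ∈ closedBall x ρ, ‖X l y‖ ≤ M)
    (hsmall : ∑ l, b l * M < ρ) :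
    ∀ u ∈ Icc (0 : ℝ) 1, g u ∈ closedBall x ρ := by
  have hcont : ContinuousOn g (Icc 0 1) := by
    have h1 := intervalIntegral.continuousOn_primitive_interval (a := (0:ℝ)) (b := 1)
      (f := controlRhs X b a g) (μ := volume)
      (by rw [uIcc_of_le zero_le_one, integrableOn_Icc_iff_integrableOn_Ioc]
          exact (intervalIntegrable_iff_integrableOn_Ioc_of_le zero_le_one).1 hint)
    rw [uIcc_of_le zero_le_one] at h1
    exact (continuousOn_const.add h1).congr fun u hu => hg u hu
  have hdist : ContinuousOn (fun u => dist (g u) x) (Icc 0 1) :=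
    (continuous_id.dist continuous_const).comp_continuousOn hcont
  by_contra! hne
  obtain ⟨u₀, hu₀, hu₀'⟩ := hne
  set Z : Set ℝ := Icc 0 1 ∩ (fun u => dist (g u) x) ⁻¹' Ici ρ with hZ
  have hZc : IsClosed Z := hdist.preimage_isClosed_of_isClosed isClosed_Icc isClosed_Ici
  have hZne : Z.Nonempty := ⟨u₀, hu₀, by
    simp only [mem_closedBall, not_le] at hu₀'; exact hu₀'.le⟩
  have hZb : BddBelow Z := ⟨0, fun u hu => hu.1.1⟩
  have hmem := hZc.csInf_mem hZne hZb
  set v := sInf Z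
  have hlt : ∀ s ∈ Ico 0 v, g s ∈ closedBall x ρ := by
    intro s hs
    by_contra hs'
    simp only [mem_closedBall, not_le] at hs'
    exact absurd (csInf_le hZb (⟨⟨hs.1, hs.2.le.trans hmem.1.2⟩, hs'.le⟩ : s ∈ Z)) (not_le.2 hs.2)
  have hbound : ‖∫ s in (0 : ℝ)..v, controlRhs X b a g s‖ ≤ (∑ l, b l * M) * |v - 0| := by
    apply intervalIntegral.norm_integral_le_of_norm_le_const_ae
    have h1 : ∀ᵐ s ∂volume, s ∈ Icc (0:ℝ) 1 → ∀ l, |a s l| ≤ 1 :=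
      (ae_restrict_iff' measurableSet_Icc).1 ha
    have h2 : ∀ᵐ s ∂(volume : Measure ℝ), s ≠ v := by
      simp [ae_iff]
    filter_upwards [h1, h2] with s hs hsv hsm
    rw [uIoc_of_le hmem.1.1] at hsm
    have hs1 : s ∈ Ico 0 v := ⟨hsm.1.le, lt_of_le_of_ne hsm.2 hsv⟩
    exact norm_controlRhs_le hb (hs ⟨hs1.1, hs1.2.le.trans hmem.1.2⟩)
      (fun l => hM l _ (hlt s hs1))
  have h3 : ρ ≤ dist (g v) x := hmem.2
  rw [hg v hmem.1, dist_self_add_left] at h3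
  have hS : 0 ≤ ∑ l, b l * M := by
    refine Finset.sum_nonneg fun l _ => mul_nonneg (hb l) ?_
    exact (norm_nonneg _).trans (hM l x (mem_closedBall_self hρ))
  have h4 : |v - 0| ≤ 1 := by rw [sub_zero, abs_of_nonneg hmem.1.1]; exact hmem.1.2
  nlinarith [mul_le_mul_of_nonneg_left h4 hS]

/-- The variation of a `C¹` function along a slow integral curve. -/
lemma abs_sub_le_of_integralCurve {n : ℕ} {ι : Type*} [Fintype ι] {X : ι → VF n} {b : ι → ℝ}
    (hb : ∀ l, 0 ≤ b l) {a : ℝ → ι → ℝ}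
    (ha : ∀ᵐ s ∂(volume.restrict (Icc (0 : ℝ) 1)), ∀ l, |a s l| ≤ 1)
    {g : ℝ → Euc n} {x : Euc n} (hint : IntervalIntegrable (controlRhs X b a g) volume 0 1)
    (hg : ∀ u ∈ Icc (0 : ℝ) 1, g u = x + ∫ s in (0 : ℝ)..u, controlRhs X b a g s)
    {ρ M : ℝ} (hM : ∀ l, ∀ y ∈ closedBall x ρ, ‖X l y‖ ≤ M)
    (hmem : ∀ u ∈ Icc (0 : ℝ) 1, g u ∈ closedBall x ρ)
    {Ω : Set (Euc n)} (hΩ : IsOpen Ω) (hsub : closedBall x ρ ⊆ Ω)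
    {φ : Euc n → ℝ} (hφ : ContDiffOn ℝ 1 φ Ω) {B : ℝ}
    (hB : ∀ s ∈ Icc (0 : ℝ) 1, ∑ l, b l * |fderiv ℝ φ (g s) (X l (g s))| ≤ B) :
    ∀ u ∈ Icc (0 : ℝ) 1, |φ (g u) - φ x| ≤ B := by
  have ha' : ∀ᵐ s ∂volume, s ∈ Icc (0:ℝ) 1 → ∀ l, |a s l| ≤ 1 :=
    (ae_restrict_iff' measurableSet_Icc).1 ha
  have hg0 : g 0 = x := by simpa using hg 0 ⟨le_rfl, zero_le_one⟩
  have hsubint : ∀ s ∈ Icc (0:ℝ) 1, ∀ t ∈ Icc (0:ℝ) 1,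
      IntervalIntegrable (controlRhs X b a g) volume s t := fun s hs t ht =>
    hint.mono_set (by rw [uIcc_of_le zero_le_one]; exact uIcc_subset_Icc hs ht)
  have hnn : 0 ≤ ∑ l, b l * M := Finset.sum_nonneg fun l _ => mul_nonneg (hb l)
    ((norm_nonneg _).trans (hM l _ (hmem 0 ⟨le_rfl, zero_le_one⟩)))
  have hLip : LipschitzOnWith (∑ l, b l * M).toNNReal g (Icc 0 1) := by
    apply LipschitzOnWith.of_dist_le_mul
    intro s hs t ht
    rw [Real.coe_toNNReal _ hnn, dist_comm, dist_eq_norm, hg s hs, hg t ht, add_sub_add_left_eq_sub,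
      intervalIntegral.integral_interval_sub_left (hsubint 0 ⟨le_rfl, zero_le_one⟩ t ht)
        (hsubint 0 ⟨le_rfl, zero_le_one⟩ s hs), Real.dist_eq, abs_sub_comm]
    apply intervalIntegral.norm_integral_le_of_norm_le_const_ae
    filter_upwards [ha'] with τ hτ hτm
    have hτ1 : τ ∈ Icc (0:ℝ) 1 := uIcc_subset_Icc hs ht (uIoc_subset_uIcc hτm)
    exact norm_controlRhs_le hb (hτ hτ1) fun l => hM l _ (hmem τ hτ1)
  obtain ⟨K, hK⟩ := (hφ.mono hsub).exists_lipschitzOnWith (by decide) (convex_closedBall x ρ)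
    (isCompact_closedBall x ρ)
  intro u hu
  have hsub' : uIcc 0 u ⊆ Icc (0:ℝ) 1 := uIcc_subset_Icc ⟨le_rfl, zero_le_one⟩ hu
  have hAC : AbsolutelyContinuousOnInterval (fun s => φ (g s)) 0 u :=
    ((hK.comp hLip fun s hs => hmem s hs).mono hsub').absolutelyContinuousOnInterval
  have hFTC := hAC.integral_deriv_eq_sub
  rw [hg0] at hFTC
  rw [← hFTC, ← Real.norm_eq_abs]
  have hB0 : 0 ≤ B := (Finset.sum_nonneg fun l _ => mul_nonneg (hb l) (abs_nonneg _)).trans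
    (hB 0 ⟨le_rfl, zero_le_one⟩)
  have hmain : ‖∫ s in (0:ℝ)..u, deriv (fun s => φ (g s)) s‖ ≤ B * |u - 0| := by
    apply intervalIntegral.norm_integral_le_of_norm_le_const_ae
    have hd := hint.ae_hasDerivAt_integral
    have h2 : ∀ᵐ s ∂(volume : Measure ℝ), s ≠ u := by simp [ae_iff]
    filter_upwards [ha', hd, h2] with s hs hds hsu hsm
    rw [uIoc_of_le hu.1] at hsm
    have hs1 : s ∈ Icc (0:ℝ) 1 := ⟨hsm.1.le, hsm.2.trans hu.2⟩
    have hs2 : s ∈ Ioo (0:ℝ) 1 := ⟨hsm.1, (lt_of_le_of_ne hsm.2 hsu).trans_le hu.2⟩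
    have hder : HasDerivAt g (controlRhs X b a g s) s := by
      have h3 := (hds (by rwa [uIcc_of_le zero_le_one]) 0 (by simp)).const_add x
      refine h3.congr_of_eventuallyEq ?_
      filter_upwards [isOpen_Ioo.mem_nhds hs2] with τ hτ
      exact hg τ ⟨hτ.1.le, hτ.2.le⟩
    have hφd : DifferentiableAt ℝ φ (g s) :=
      (hφ.contDiffAt (hΩ.mem_nhds (hsub (hmem s hs1)))).differentiableAt (by simp)
    have h4 : HasDerivAt (fun s => φ (g s)) (fderiv ℝ φ (g s) (controlRhs X b a g s)) s :=
      hφd.hasFDerivAt.comp_hasDerivAt s hder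
    rw [h4.deriv]
    refine le_trans ?_ (hB s hs1)
    simp only [controlRhs, map_sum, map_smul]
    refine (norm_sum_le _ _).trans (Finset.sum_le_sum fun l _ => ?_)
    rw [norm_smul, norm_smul, Real.norm_eq_abs, Real.norm_eq_abs, abs_of_nonneg (hb l),
      Real.norm_eq_abs]
    exact mul_le_of_le_one_left (mul_nonneg (hb l) (abs_nonneg _)) (hs hs1 l)
  have h4 : |u - 0| ≤ 1 := by rw [sub_zero, abs_of_nonneg hu.1]; exact hu.2
  exact hmain.trans (mul_le_of_le_one_right hB0 h4)

lemma sum_det_updateRow_eq_sum_det_updateCol {κ R : Type*} [Fintype κ] [DecidableEq κ] [CommRing R]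
    (A B : Matrix κ κ R) :
    ∑ i, (A.updateRow i (B i)).det = ∑ j, (A.updateCol j (B.col j)).det := by
  have h1 : ∀ j, (A.updateCol j (B.col j)).det = ∑ i, A.adjugate j i * B i j := by
    intro j
    rw [← Matrix.cramer_apply, Matrix.cramer_eq_adjugate_mulVec]
    rfl
  have h2 : ∀ i, (A.updateRow i (B i)).det = ∑ j, A.adjugate j i * B i j := by
    intro i
    rw [← Matrix.cramer_transpose_apply, Matrix.cramer_eq_adjugate_mulVec,
      ← Matrix.adjugate_transpose]
    rfl
  simp only [h1, h2]
  exact Finset.sum_comm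

lemma det_updateRow_finset_sum {κ σ R : Type*} [Fintype κ] [DecidableEq κ] [Fintype σ] [CommRing R]
    (A : Matrix κ κ R) (i : κ) (c : σ → R) (v : σ → κ → R) :
    (A.updateRow i (fun j => ∑ m, c m * v m j)).det = ∑ m, c m * (A.updateRow i (v m)).det := by
  simp only [← Matrix.cramer_transpose_apply]
  have : (fun j => ∑ m, c m * v m j) = ∑ m, c m • v m := by
    ext j; simp
  rw [this, map_sum]
  simp

lemma det_updateCol_finset_sum {κ σ R : Type*} [Fintype κ] [DecidableEq κ] [Fintype σ] [CommRing R]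
    (A : Matrix κ κ R) (j : κ) (c : σ → R) (v : σ → κ → R) :
    (A.updateCol j (fun i => ∑ m, c m * v m i)).det = ∑ m, c m * (A.updateCol j (v m)).det := by
  simp only [← Matrix.cramer_apply]
  have : (fun j => ∑ m, c m * v m j) = ∑ m, c m • v m := by
    ext j; simp
  rw [this, map_sum]
  simp

lemma fderiv_det_apply {κ E : Type*} [Fintype κ] [DecidableEq κ] [NormedAddCommGroup E]
    [NormedSpace ℝ E] {A : E → Matrix κ κ ℝ} {y : E}
    (hA : ∀ i j, DifferentiableAt ℝ (fun z => A z i j) y) (v : E) :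
    fderiv ℝ (fun z => (A z).det) y v
      = ∑ i, ((A y).updateRow i (fun j => fderiv ℝ (fun z => A z i j) y v)).det := by
  let f : ContinuousMultilinearMap ℝ (fun _ : κ => κ → ℝ) ℝ :=
    { (Matrix.detRowAlternating (R := ℝ) (n := κ)).toMultilinearMap with
      cont := by
        change Continuous fun M : Matrix κ κ ℝ => M.det
        exact continuous_id.matrix_det }
  have hf : ∀ M : Matrix κ κ ℝ, f M = M.det := fun M => rfl
  have hrow : ∀ i, HasFDerivAt (fun z => A z i)
      (ContinuousLinearMap.pi fun j => fderiv ℝ (fun z => A z i j) y) y := fun i =>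
    hasFDerivAt_pi.2 fun j => (hA i j).hasFDerivAt
  have h := HasFDerivAt.multilinear_comp f hrow
  have h' : HasFDerivAt (fun z => (A z).det) _ y := h
  rw [h'.fderiv]
  simp only [FunLike.coe_sum, Finset.sum_apply, ContinuousLinearMap.comp_apply]
  refine Finset.sum_congr rfl fun i _ => ?_
  rfl

/-- The minor of `δ𝐗` with rows `I` and columns `J`, as a function of the base point. -/
def scaledMinor {ν n Q : ℕ} (X : Fin Q → VF n) (d : Fin Q → Deg ν) (δ : Fin ν → ℝ) {κ : Type*}
    [Fintype κ] [DecidableEq κ] (I : κ → Fin n) (J : κ → Fin Q) (y : Euc n) : ℝ :=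
  ((scaledMat X d δ y).submatrix I J).det

/-- `δ^{d_k + d_l - d_i}` if `d_i ≤ d_k + d_l`, and zero otherwise. -/
def bracketWeight {ν Q : ℕ} (d : Fin Q → Deg ν) (δ : Fin ν → ℝ) (k l i : Fin Q) : ℝ :=
  open Classical in if ∀ μ, d i μ ≤ d k μ + d l μ then dpow δ (d k + d l - d i) else 0

lemma dpow_add {ν : ℕ} {δ a b : Fin ν → ℝ} (hδ : ∀ μ, 0 ≤ δ μ) (ha : ∀ μ, 0 ≤ a μ)
    (hb : ∀ μ, 0 ≤ b μ) : dpow δ (a + b) = dpow δ a * dpow δ b := by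
  simp only [dpow, ← Finset.prod_mul_distrib]
  exact Finset.prod_congr rfl fun μ _ => Real.rpow_add_of_nonneg (hδ μ) (ha μ) (hb μ)

lemma dpow_nonneg {ν : ℕ} {δ : Fin ν → ℝ} (a : Fin ν → ℝ) (hδ : ∀ μ, 0 ≤ δ μ) : 0 ≤ dpow δ a :=
  Finset.prod_nonneg fun μ _ => Real.rpow_nonneg (hδ μ) _

lemma dpow_le_one {ν : ℕ} {δ a : Fin ν → ℝ} (hδ : δ ∈ unitCube ν) (ha : ∀ μ, 0 ≤ a μ) :
    dpow δ a ≤ 1 :=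
  Finset.prod_le_one (fun μ _ => Real.rpow_nonneg (hδ μ).1 _)
    fun μ _ => Real.rpow_le_one (hδ μ).1 (hδ μ).2 (ha μ)

lemma dpow_const_mul {ν : ℕ} {δ a : Fin ν → ℝ} {t : ℝ} (ht : 0 < t) (hδ : ∀ μ, 0 ≤ δ μ) :
    dpow (fun μ => t * δ μ) a = t ^ (∑ μ, a μ) * dpow δ a := by
  simp only [dpow]
  rw [Real.rpow_sum_of_pos ht, ← Finset.prod_mul_distrib]
  exact Finset.prod_congr rfl fun μ _ => Real.mul_rpow ht.le (hδ μ)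

lemma bracketWeight_mem_Icc {ν Q : ℕ} {d : Fin Q → Deg ν} {δ : Fin ν → ℝ} (hδ : δ ∈ unitCube ν)
    (k l i : Fin Q) : bracketWeight d δ k l i ∈ Icc (0 : ℝ) 1 := by
  unfold bracketWeight
  split_ifs with h
  · exact ⟨dpow_nonneg _ fun μ => (hδ μ).1, dpow_le_one hδ fun μ => by simpa using h μ⟩
  · exact ⟨le_rfl, zero_le_one⟩

lemma dpow_mul_dpow_mul_bracketCoeff {ν n Q : ℕ} {d : Fin Q → Deg ν} {δ : Fin ν → ℝ}
    (hd : ∀ l μ, 0 ≤ d l μ) (hδ : ∀ μ, 0 ≤ δ μ) {k l i : Fin Q} {c : Euc n → ℝ}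
    (hc : ¬ (∀ μ, d i μ ≤ d k μ + d l μ) → c = 0) (y : Euc n) :
    dpow δ (d k) * dpow δ (d l) * c y = bracketWeight d δ k l i * c y * dpow δ (d i) := by
  unfold bracketWeight
  split_ifs with h
  · rw [← dpow_add hδ (hd k) (hd l), ← sub_add_cancel (d k + d l) (d i),
      dpow_add hδ (fun μ => by simpa using h μ) (hd i), sub_add_cancel]
    ring
  · simp [hc h]

/-- Minors of `δ𝐗` satisfy a linear first order system along the fields of `δ𝐗`. -/
lemma fderiv_scaledMinor_apply {ν n Q : ℕ} {Ω : Set (Euc n)} (hΩ : IsOpen Ω)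
    {X : Fin Q → VF n} {d : Fin Q → Deg ν} (hd : ∀ l μ, 0 ≤ d l μ)
    (hX : ∀ l, ContDiffOn ℝ (⊤ : ℕ∞) (X l) Ω)
    {c : Fin Q → Fin Q → Fin Q → Euc n → ℝ}
    (hc0 : ∀ k l i, ¬ (∀ μ, d i μ ≤ d k μ + d l μ) → c k l i = 0)
    (hc : ∀ k l, ∀ y ∈ Ω, lieBracket (X k) (X l) y = ∑ i, c k l i y • X i y)
    {δ : Fin ν → ℝ} (hδ : ∀ μ, 0 ≤ δ μ) {κ : Type*} [Fintype κ] [DecidableEq κ]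
    (I : κ → Fin n) (J : κ → Fin Q) (k : Fin Q) {y : Euc n} (hy : y ∈ Ω) :
    dpow δ (d k) * fderiv ℝ (scaledMinor X d δ I J) y (X k y) =
      (∑ j, ∑ l, bracketWeight d δ k (J j) l * c k (J j) l y *
        scaledMinor X d δ I (Function.update J j l) y) +
      ∑ i, ∑ m, dpow δ (d k) * fderiv ℝ (X k) y (EuclideanSpace.single m 1) (I i) *
        scaledMinor X d δ (Function.update I i m) J y := by
  have hdX : ∀ l, DifferentiableAt ℝ (X l) y := fun l =>
    ((hX l).contDiffAt (hΩ.mem_nhds hy)).differentiableAt (by simp)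
  set A : Euc n → Matrix κ κ ℝ := fun z => (scaledMat X d δ z).submatrix I J with hAdef
  have hentry : ∀ l i, HasFDerivAt (fun z => X l z i)
      ((EuclideanSpace.proj i : Euc n →L[ℝ] ℝ).comp (fderiv ℝ (X l) y)) y := fun l i =>
    (EuclideanSpace.proj i : Euc n →L[ℝ] ℝ).hasFDerivAt.comp y (hdX l).hasFDerivAt
  have hA' : ∀ i j, HasFDerivAt (fun z => A z i j)
      (dpow δ (d (J j)) • (EuclideanSpace.proj (I i) : Euc n →L[ℝ] ℝ).comp
        (fderiv ℝ (X (J j)) y)) y := fun i j => (hentry (J j) (I i)).const_mul _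
  have hdet := fderiv_det_apply (fun i j => (hA' i j).differentiableAt) (X k y)
  have hsm : scaledMinor X d δ I J = fun z => (A z).det := rfl
  let B₁ : Matrix κ κ ℝ := fun i j =>
    ∑ l, bracketWeight d δ k (J j) l * c k (J j) l y * scaledMat X d δ y (I i) l
  let B₂ : Matrix κ κ ℝ := fun i j =>
    ∑ m, dpow δ (d k) * fderiv ℝ (X k) y (EuclideanSpace.single m 1) (I i) *
      scaledMat X d δ y m (J j)
  have hp : ∀ i (v : Euc n), (EuclideanSpace.proj i : Euc n →L[ℝ] ℝ) v = v i := fun _ _ => rfl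
  have hsplit : ∀ i j, dpow δ (d k) * fderiv ℝ (fun z => A z i j) y (X k y) = B₁ i j + B₂ i j := by
    intro i j
    rw [(hA' i j).fderiv]
    have e1 : fderiv ℝ (X (J j)) y (X k y) =
        ∑ i, c k (J j) i y • X i y + fderiv ℝ (X k) y (X (J j) y) := by
      rw [← hc k (J j) y hy, lieBracket]; abel
    have e2 : fderiv ℝ (X k) y (X (J j) y) =
        ∑ m, X (J j) y m • fderiv ℝ (X k) y (EuclideanSpace.single m 1) := by
      conv_lhs => rw [← (EuclideanSpace.basisFun (Fin n) ℝ).sum_repr (X (J j) y)]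
      simp [map_sum]
    simp only [smul_apply, ContinuousLinearMap.comp_apply, e1, e2, map_add,
      map_sum, map_smul, smul_eq_mul, mul_add, Finset.mul_sum]
    congr 1
    · refine Finset.sum_congr rfl fun l _ => ?_
      have := dpow_mul_dpow_mul_bracketCoeff hd hδ (hc0 k (J j) l) y
      simp only [scaledMat, hp]
      linear_combination (X l y (I i)) * this
    · refine Finset.sum_congr rfl fun m _ => ?_
      simp only [scaledMat, hp]
      ring
  have hsum : dpow δ (d k) * fderiv ℝ (scaledMinor X d δ I J) y (X k y) =
      ∑ i, ((A y).updateRow i (B₁ i)).det + ∑ i, ((A y).updateRow i (B₂ i)).det := by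
    rw [hsm, hdet, Finset.mul_sum, ← Finset.sum_add_distrib]
    refine Finset.sum_congr rfl fun i _ => ?_
    rw [← Matrix.det_updateRow_smul, ← Matrix.det_updateRow_add]
    congr 2
    ext j
    exact hsplit i j
  rw [hsum, sum_det_updateRow_eq_sum_det_updateCol]
  congr 1
  · refine Finset.sum_congr rfl fun j _ => ?_
    have := det_updateCol_finset_sum (A y) j
      (fun l => bracketWeight d δ k (J j) l * c k (J j) l y)
      (fun l i => scaledMat X d δ y (I i) l)
    refine this.trans (Finset.sum_congr rfl fun l _ => ?_)
    congr 2
    ext i' j'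
    by_cases h : j' = j
    · subst h; simp
    · simp [h, A]
  · refine Finset.sum_congr rfl fun i _ => ?_
    have := det_updateRow_finset_sum (A y) i
      (fun m => dpow δ (d k) * fderiv ℝ (X k) y (EuclideanSpace.single m 1) (I i))
      (fun m j => scaledMat X d δ y m (J j))
    refine this.trans (Finset.sum_congr rfl fun m _ => ?_)
    congr 2
    ext i' j'
    by_cases h : i' = i
    · subst h; simp
    · simp [h, A]

/-- The algebra of parametrised functions generated by smooth functions on `Ω`, bounded
constants depending on the parameter, and the quotients `v p / v p₀`. -/
inductive QuotientAlgebra {n : ℕ} {Θ P : Type*} (Ω : Set (Euc n)) (v : P → Θ → Euc n → ℝ)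
    (p₀ : P) : (Θ → Euc n → ℝ) → Prop
  | smooth {h : Euc n → ℝ} : ContDiffOn ℝ (⊤ : ℕ∞) h Ω → QuotientAlgebra Ω v p₀ fun _ y => h y
  | param {s : Θ → ℝ} : (∃ C, ∀ θ, |s θ| ≤ C) → QuotientAlgebra Ω v p₀ fun θ _ => s θ
  | quotient (p : P) : QuotientAlgebra Ω v p₀ fun θ y => v p θ y / v p₀ θ y
  | add {f g : Θ → Euc n → ℝ} : QuotientAlgebra Ω v p₀ f → QuotientAlgebra Ω v p₀ g →
      QuotientAlgebra Ω v p₀ fun θ y => f θ y + g θ y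
  | mul {f g : Θ → Euc n → ℝ} : QuotientAlgebra Ω v p₀ f → QuotientAlgebra Ω v p₀ g →
      QuotientAlgebra Ω v p₀ fun θ y => f θ y * g θ y

namespace QuotientAlgebra

variable {n : ℕ} {Θ P : Type*} {Ω : Set (Euc n)} {v : P → Θ → Euc n → ℝ} {p₀ : P}

lemma sum {σ : Type*} (A : Finset σ) {f : σ → Θ → Euc n → ℝ}
    (hf : ∀ t, QuotientAlgebra Ω v p₀ (f t)) :
    QuotientAlgebra Ω v p₀ fun θ y => ∑ t ∈ A, f t θ y := by
  classical
  induction A using Finset.induction_on with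
  | empty => simpa using smooth (h := fun _ => 0) contDiffOn_const
  | insert a A ha ih => simpa [Finset.sum_insert ha] using add (hf a) ih

lemma neg {f : Θ → Euc n → ℝ} (hf : QuotientAlgebra Ω v p₀ f) :
    QuotientAlgebra Ω v p₀ fun θ y => - f θ y := by
  simpa using mul (smooth (h := fun _ => -1) contDiffOn_const) hf

lemma contDiffOn (hv : ∀ p θ, ContDiffOn ℝ (⊤ : ℕ∞) (v p θ) Ω) {f : Θ → Euc n → ℝ}
    (hf : QuotientAlgebra Ω v p₀ f) (θ : Θ) :
    ContDiffOn ℝ (⊤ : ℕ∞) (f θ) {y ∈ Ω | v p₀ θ y ≠ 0} := by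
  induction hf with
  | smooth h => exact h.mono fun y hy => hy.1
  | param _ => exact contDiffOn_const
  | quotient p =>
    exact ((hv p θ).mono fun y hy => hy.1).div ((hv p₀ θ).mono fun y hy => hy.1) fun y hy => hy.2
  | add _ _ ihf ihg => exact ihf.add ihg
  | mul _ _ ihf ihg => exact ihf.mul ihg

lemma bounded {K : Set (Euc n)} (hK : IsCompact K) (hKΩ : K ⊆ Ω) {C : ℝ} {f : Θ → Euc n → ℝ}
    (hf : QuotientAlgebra Ω v p₀ f) :
    ∃ B, ∀ θ, ∀ y ∈ K, (∀ p, |v p θ y| ≤ C * |v p₀ θ y|) → |f θ y| ≤ B := by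
  induction hf with
  | smooth h =>
    obtain ⟨B, hB⟩ := hK.exists_bound_of_continuousOn (h.continuousOn.mono hKΩ)
    exact ⟨B, fun θ y hy _ => hB y hy⟩
  | param h =>
    obtain ⟨B, hB⟩ := h
    exact ⟨B, fun θ y _ _ => hB θ⟩
  | quotient p =>
    refine ⟨|C|, fun θ y _ h => ?_⟩
    rw [abs_div]
    exact div_le_of_le_mul₀ (abs_nonneg _) (abs_nonneg _)
      ((h p).trans (mul_le_mul_of_nonneg_right (le_abs_self C) (abs_nonneg _)))
  | add _ _ ihf ihg =>
    obtain ⟨B, hB⟩ := ihf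
    obtain ⟨B', hB'⟩ := ihg
    exact ⟨B + B', fun θ y hy h => (abs_add_le _ _).trans (add_le_add (hB θ y hy h) (hB' θ y hy h))⟩
  | mul _ _ ihf ihg =>
    obtain ⟨B, hB⟩ := ihf
    obtain ⟨B', hB'⟩ := ihg
    refine ⟨B * B', fun θ y hy h => ?_⟩
    rw [abs_mul]
    exact mul_le_mul (hB θ y hy h) (hB' θ y hy h) (abs_nonneg _)
      ((abs_nonneg _).trans (hB θ y hy h))

variable {ι T : Type*} [Fintype T] {X : ι → VF n} {w : Θ → ι → ℝ}
  {s : ι → P → T → Θ → ℝ} {h : ι → P → T → Euc n → ℝ} {τ : P → T → P}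

lemma exists_derivAlong_eqOn (hΩ : IsOpen Ω) (hX : ∀ l, ContDiffOn ℝ (⊤ : ℕ∞) (X l) Ω)
    (hw : ∀ l, ∃ C, ∀ θ, |w θ l| ≤ C) (hv : ∀ p θ, ContDiffOn ℝ (⊤ : ℕ∞) (v p θ) Ω)
    (hs : ∀ k p t, ∃ C, ∀ θ, |s k p t θ| ≤ C) (hh : ∀ k p t, ContDiffOn ℝ (⊤ : ℕ∞) (h k p t) Ω)
    (hode : ∀ k p θ, ∀ y ∈ Ω, w θ k * fderiv ℝ (v p θ) y (X k y) =
      ∑ t, s k p t θ * h k p t y * v (τ p t) θ y)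
    {f : Θ → Euc n → ℝ} (hf : QuotientAlgebra Ω v p₀ f) (k : ι) :
    ∃ g, QuotientAlgebra Ω v p₀ g ∧
      ∀ θ, EqOn (derivAlong (fun x => w θ k • X k x) (f θ)) (g θ) {y ∈ Ω | v p₀ θ y ≠ 0} := by
  have hopen : ∀ θ, IsOpen {y ∈ Ω | v p₀ θ y ≠ 0} := fun θ =>
    (hv p₀ θ).continuousOn.isOpen_inter_preimage hΩ isOpen_ne
  have hdiff : ∀ {f : Θ → Euc n → ℝ}, QuotientAlgebra Ω v p₀ f → ∀ θ,
      ∀ y ∈ {y ∈ Ω | v p₀ θ y ≠ 0}, DifferentiableAt ℝ (f θ) y := fun hf θ y hy =>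
    ((hf.contDiffOn hv θ).contDiffAt ((hopen θ).mem_nhds hy)).differentiableAt (by simp)
  have hvdiff : ∀ p θ, ∀ y ∈ Ω, DifferentiableAt ℝ (v p θ) y := fun p θ y hy =>
    ((hv p θ).contDiffAt (hΩ.mem_nhds hy)).differentiableAt (by simp)
  induction hf with
  | @smooth h h' =>
    refine ⟨fun θ y => w θ k * fderiv ℝ h y (X k y), mul (param (hw k)) (smooth ?_), ?_⟩
    · exact (h'.fderiv_of_isOpen hΩ (by simp)).clm_apply (hX k)
    · intro θ y _
      simp [derivAlong]
  | param _ =>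
    refine ⟨fun _ _ => 0, smooth contDiffOn_const, fun θ y _ => ?_⟩
    simp [derivAlong]
  | quotient p =>
    refine ⟨fun θ y => (∑ t, s k p t θ * h k p t y * (v (τ p t) θ y / v p₀ θ y)) +
      -(v p θ y / v p₀ θ y * ∑ t, s k p₀ t θ * h k p₀ t y * (v (τ p₀ t) θ y / v p₀ θ y)),
      add (sum _ fun t => mul (mul (param (hs k p t)) (smooth (hh k p t))) (quotient _))
        (neg (mul (quotient p)
          (sum _ fun t => mul (mul (param (hs k p₀ t)) (smooth (hh k p₀ t))) (quotient _)))), ?_⟩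
    intro θ y hy
    have h1 := hode k p θ y hy.1
    have h2 := hode k p₀ θ y hy.1
    have h3 := ((hvdiff p θ y hy.1).hasFDerivAt.mul
      ((hasDerivAt_inv hy.2).comp_hasFDerivAt y (hvdiff p₀ θ y hy.1).hasFDerivAt)).fderiv
    have h4 : (fun y => v p θ y / v p₀ θ y) = v p θ * (Inv.inv ∘ v p₀ θ) := by
      ext y; simp [div_eq_mul_inv]
    have h0 := hy.2
    simp only [derivAlong]
    rw [h4, h3]
    simp only [map_smul, add_apply, smul_apply, smul_eq_mul, Function.comp]
    simp only [mul_div_assoc', ← Finset.sum_div, ← h1, ← h2]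
    field_simp
    ring
  | @add f₁ f₂ h₁ h₂ ih₁ ih₂ =>
    obtain ⟨g₁, hg₁, he₁⟩ := ih₁
    obtain ⟨g₂, hg₂, he₂⟩ := ih₂
    refine ⟨_, add hg₁ hg₂, fun θ y hy => ?_⟩
    simp only [← he₁ θ hy, ← he₂ θ hy, derivAlong]
    rw [fderiv_fun_add (hdiff h₁ θ y hy) (hdiff h₂ θ y hy)]
    rfl
  | @mul f₁ f₂ h₁ h₂ ih₁ ih₂ =>
    obtain ⟨g₁, hg₁, he₁⟩ := ih₁
    obtain ⟨g₂, hg₂, he₂⟩ := ih₂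
    refine ⟨_, add (mul h₁ hg₂) (mul hg₁ h₂), fun θ y hy => ?_⟩
    simp only [← he₁ θ hy, ← he₂ θ hy, derivAlong]
    rw [fderiv_fun_mul (hdiff h₁ θ y hy) (hdiff h₂ θ y hy)]
    simp only [add_apply, smul_apply, smul_eq_mul]
    ring

lemma exists_derivList_eqOn (hΩ : IsOpen Ω) (hX : ∀ l, ContDiffOn ℝ (⊤ : ℕ∞) (X l) Ω)
    (hw : ∀ l, ∃ C, ∀ θ, |w θ l| ≤ C) (hv : ∀ p θ, ContDiffOn ℝ (⊤ : ℕ∞) (v p θ) Ω)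
    (hs : ∀ k p t, ∃ C, ∀ θ, |s k p t θ| ≤ C) (hh : ∀ k p t, ContDiffOn ℝ (⊤ : ℕ∞) (h k p t) Ω)
    (hode : ∀ k p θ, ∀ y ∈ Ω, w θ k * fderiv ℝ (v p θ) y (X k y) =
      ∑ t, s k p t θ * h k p t y * v (τ p t) θ y)
    {f : Θ → Euc n → ℝ} (hf : QuotientAlgebra Ω v p₀ f) (α : List ι) :
    ∃ g, QuotientAlgebra Ω v p₀ g ∧
      ∀ θ, EqOn (derivList X (w θ) α (f θ)) (g θ) {y ∈ Ω | v p₀ θ y ≠ 0} := by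
  induction α with
  | nil => exact ⟨f, hf, fun θ y _ => rfl⟩
  | cons k α ih =>
    obtain ⟨g, hg, he⟩ := ih
    obtain ⟨g', hg', he'⟩ := exists_derivAlong_eqOn hΩ hX hw hv hs hh hode hg k
    refine ⟨g', hg', fun θ y hy => ?_⟩
    have hopen : IsOpen {y ∈ Ω | v p₀ θ y ≠ 0} :=
      (hv p₀ θ).continuousOn.isOpen_inter_preimage hΩ isOpen_ne
    rw [← he' θ hy]
    change fderiv ℝ (derivList X (w θ) α (f θ)) y _ = fderiv ℝ (g θ) y _
    rw [((he θ).eventuallyEq_of_mem (hopen.mem_nhds hy)).fderiv_eq]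

end QuotientAlgebra

lemma entry_eq_sum_of_bordered_minor_eq_zero {m n κ R : Type*} [Fintype κ] [DecidableEq κ]
    [Field R] (M : Matrix m n R) (I : κ → m) (J : κ → n) (h0 : (M.submatrix I J).det ≠ 0)
    {i : m} {l : n}
    (h : (M.submatrix (Sum.elim I fun _ : Unit => i) (Sum.elim J fun _ : Unit => l)).det = 0) :
    M i l = ∑ j, (M.submatrix I (Function.update J j l)).det / (M.submatrix I J).det *
      M i (J j) := by
  set A := M.submatrix I J with hA
  have hu : IsUnit A.det := isUnit_iff_ne_zero.2 h0
  let _ := A.invertibleOfIsUnitDet hu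
  have hblock : M.submatrix (Sum.elim I fun _ : Unit => i) (Sum.elim J fun _ : Unit => l) =
      Matrix.fromBlocks A (Matrix.of fun k _ => M (I k) l) (Matrix.of fun _ j => M i (J j))
        (Matrix.of fun _ _ => M i l) := by
    ext a b
    rcases a with a | a <;> rcases b with b | b <;> rfl
  rw [hblock, Matrix.det_fromBlocks₁₁, mul_eq_zero, or_iff_right h0, Matrix.det_unique,
    Matrix.sub_apply, sub_eq_zero] at h
  have hupd : ∀ j, M.submatrix I (Function.update J j l) = A.updateCol j (fun k => M (I k) l) := by
    intro j
    ext a b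
    by_cases hb : b = j
    · subst hb; simp
    · simp [hb, A]
  have hcr : ∀ j, (A.updateCol j (fun k => M (I k) l)).det / A.det =
      (A⁻¹.mulVec (fun k => M (I k) l)) j := by
    intro j
    rw [← Matrix.cramer_apply, Matrix.cramer_eq_adjugate_mulVec, Matrix.inv_def,
      Ring.inverse_eq_inv', Matrix.smul_mulVec, Pi.smul_apply, smul_eq_mul]
    field_simp
  simp only [hupd, hcr]
  rw [Matrix.of_apply] at h
  rw [h, Matrix.invOf_eq_nonsing_inv, Matrix.mul_assoc, Matrix.mul_apply]
  refine Finset.sum_congr rfl fun j _ => ?_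
  rw [mul_comm]
  rfl

lemma det_submatrix_eq_zero_of_rank_lt {m n κ : Type*} [Fintype n] [Fintype κ]
    [DecidableEq κ] {M : Matrix m n ℝ} (h : M.rank < Fintype.card κ) (I : κ → m) (J : κ → n) :
    (M.submatrix I J).det = 0 := by
  by_contra hne
  have h1 : (M.submatrix I J).rank = Fintype.card κ :=
    Matrix.rank_of_isUnit _ ((Matrix.isUnit_iff_isUnit_det _).2 (isUnit_iff_ne_zero.2 hne))
  have h2 := M.rank_submatrix_le I J
  omega

lemma exists_submatrix_linearIndependent_col {m n : Type*} [Fintype m] [Fintype n]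
    (M : Matrix m n ℝ) : ∃ J : Fin M.rank → n, LinearIndependent ℝ (M.submatrix id J).col := by
  obtain ⟨κ, a, ha, hspan, hli⟩ := exists_linearIndependent' ℝ M.col
  have _ : Fintype κ := Fintype.ofInjective a ha
  have hcard : Fintype.card κ = M.rank := by
    rw [M.rank_eq_finrank_span_cols, ← hspan]
    exact (finrank_span_eq_card hli).symm
  let e : Fin M.rank ≃ κ := (Fintype.equivFinOfCardEq hcard).symm
  exact ⟨a ∘ e, hli.comp e e.injective⟩

lemma exists_submatrix_det_ne_zero {m n : Type*} [Fintype m] [Fintype n] {M : Matrix m n ℝ} {r : ℕ}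
    (hr : M.rank = r) :
    ∃ (I : Fin r → m) (J : Fin r → n), (M.submatrix I J).det ≠ 0 := by
  subst hr
  obtain ⟨J, hJ⟩ := exists_submatrix_linearIndependent_col M
  have hrank : (M.submatrix id J).transpose.rank = M.rank := by
    rw [Matrix.rank_transpose, Matrix.rank_eq_finrank_span_cols, finrank_span_eq_card hJ,
      Fintype.card_fin]
  obtain ⟨I, hI⟩ := exists_submatrix_linearIndependent_col (M.submatrix id J).transpose
  refine ⟨I ∘ finCongr hrank.symm, J, ?_⟩
  have hli : LinearIndependent ℝ (M.submatrix (I ∘ finCongr hrank.symm) J).row :=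
    hI.comp (finCongr hrank.symm) (finCongr hrank.symm).injective
  exact ((Matrix.isUnit_iff_isUnit_det _).1
    (Matrix.linearIndependent_rows_iff_isUnit.1 hli)).ne_zero

/-- Functions solving a linear first order system along the fields vary little along a slow
integral curve. -/
lemma abs_sub_le_of_linear_system {n : ℕ} {ι P T : Type*} [Fintype ι] [Finite P] [Fintype T]
    {X : ι → VF n} {b w : ι → ℝ} {η : ℝ} (hb : ∀ l, 0 ≤ b l) (hw : ∀ l, 0 ≤ w l) (hη : 0 ≤ η)
    (hbw : ∀ l, b l ≤ η * w l) {a : ℝ → ι → ℝ}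
    (ha : ∀ᵐ s ∂(volume.restrict (Icc (0 : ℝ) 1)), ∀ l, |a s l| ≤ 1)
    {g : ℝ → Euc n} {x : Euc n} (hint : IntervalIntegrable (controlRhs X b a g) volume 0 1)
    (hg : ∀ u ∈ Icc (0 : ℝ) 1, g u = x + ∫ s in (0 : ℝ)..u, controlRhs X b a g s)
    {ρ M : ℝ} (hM : ∀ l, ∀ y ∈ closedBall x ρ, ‖X l y‖ ≤ M)
    (hmem : ∀ u ∈ Icc (0 : ℝ) 1, g u ∈ closedBall x ρ)
    {Ω : Set (Euc n)} (hΩ : IsOpen Ω) (hsub : closedBall x ρ ⊆ Ω)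
    {v : P → Euc n → ℝ} (hv : ∀ p, ContDiffOn ℝ 1 (v p) Ω)
    {A : ι → P → T → Euc n → ℝ} {τ : P → T → P} {H : ℝ} (hH : 0 ≤ H)
    (hA : ∀ k p t, ∀ y ∈ closedBall x ρ, |A k p t y| ≤ H)
    (hode : ∀ k p, ∀ y ∈ Ω, w k * fderiv ℝ (v p) y (X k y) = ∑ t, A k p t y * v (τ p t) y)
    (hsmall : Fintype.card ι * η * (Fintype.card T * H) ≤ 1 / 2) {S : ℝ}
    (hS : ∀ p, |v p x| ≤ S) (p : P) {u : ℝ} (hu : u ∈ Icc (0 : ℝ) 1) :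
    |v p (g u) - v p x| ≤ 2 * (Fintype.card ι * η * (Fintype.card T * H)) * S := by
  set κ : ℝ := Fintype.card ι * η * (Fintype.card T * H) with hκ
  have hκ0 : 0 ≤ κ := by positivity
  let V : P × Icc (0:ℝ) 1 → ℝ := fun q => |v q.1 (g q.2)|
  have hbdd : BddAbove (range V) := by
    have h1 : ∀ p, ∃ N, ∀ y ∈ closedBall x ρ, |v p y| ≤ N := fun p =>
      (isCompact_closedBall x ρ).exists_bound_of_continuousOn ((hv p).continuousOn.mono hsub)
    choose N hN using h1
    obtain ⟨N', hN'⟩ := (Set.finite_range N).bddAbove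
    refine ⟨N', ?_⟩
    rintro _ ⟨q, rfl⟩
    exact (hN q.1 _ (hmem q.2 q.2.2)).trans (hN' ⟨q.1, rfl⟩)
  set B := sSup (range V) with hBdef
  have hVB : ∀ p, ∀ s ∈ Icc (0:ℝ) 1, |v p (g s)| ≤ B := fun p s hs =>
    le_csSup hbdd ⟨(p, ⟨s, hs⟩), rfl⟩
  have hvar : ∀ p, ∀ s ∈ Icc (0:ℝ) 1, |v p (g s) - v p x| ≤ κ * B := by
    intro p
    apply abs_sub_le_of_integralCurve hb ha hint hg hM hmem hΩ hsub (hv p)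
    intro s hs
    have hterm : ∀ l, b l * |fderiv ℝ (v p) (g s) (X l (g s))| ≤
        η * (Fintype.card T * (H * B)) := by
      intro l
      calc b l * |fderiv ℝ (v p) (g s) (X l (g s))|
          ≤ η * w l * |fderiv ℝ (v p) (g s) (X l (g s))| :=
            mul_le_mul_of_nonneg_right (hbw l) (abs_nonneg _)
        _ = η * |∑ t, A l p t (g s) * v (τ p t) (g s)| := by
            rw [← hode l p _ (hsub (hmem s hs)), abs_mul, abs_of_nonneg (hw l), mul_assoc]
        _ ≤ η * ∑ _t : T, H * B := by
            refine mul_le_mul_of_nonneg_left ((Finset.abs_sum_le_sum_abs _ _).trans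
              (Finset.sum_le_sum fun t _ => ?_)) hη
            rw [abs_mul]
            exact mul_le_mul (hA l p t _ (hmem s hs)) (hVB _ s hs) (abs_nonneg _) hH
        _ = _ := by simp
    refine (Finset.sum_le_sum fun l _ => hterm l).trans (le_of_eq ?_)
    simp only [Finset.sum_const, Finset.card_univ, nsmul_eq_mul, hκ]
    ring
  have hB2 : B ≤ S + κ * B := by
    refine csSup_le ⟨_, (p, ⟨u, hu⟩), rfl⟩ ?_
    rintro _ ⟨⟨p', s, hs⟩, rfl⟩
    have h1 := hvar p' s hs
    have h2 := hS p'
    have h3 := abs_sub_abs_le_abs_sub (v p' (g s)) (v p' x)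
    change |v p' (g s)| ≤ _
    linarith
  have hB0 : 0 ≤ B := (abs_nonneg _).trans (hVB p u hu)
  have hB3 : B ≤ 2 * S := by nlinarith
  calc |v p (g u) - v p x| ≤ κ * B := hvar p u hu
    _ ≤ κ * (2 * S) := mul_le_mul_of_nonneg_left hB3 hκ0
    _ = _ := by ring

/-- Shrinking the radius preserves the solvability condition. -/
lemma Zhang.SatC.mono {ν n : ℕ} {ι : Type*} [Fintype ι] {X : ι → VF n} {d : ι → Deg ν} {x : Euc n}
    {Ω : Set (Euc n)} (hd : ∀ l μ, 0 ≤ d l μ) {ξ ξ' : ℝ} (hξ : 0 < ξ) (hle : ξ ≤ ξ')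
    (h : SatC X d x (vecConst ν ξ') Ω) : SatC X d x (vecConst ν ξ) Ω := by
  rintro a ⟨ham, c, hc1, hc⟩
  have hξ' : 0 < ξ' := hξ.trans_le hle
  have hq : vecConst ν ξ = fun μ => ξ / ξ' * vecConst ν ξ' μ := by
    ext μ; simp only [vecConst]; field_simp
  have hq0 : 0 < ξ / ξ' := div_pos hξ hξ'
  have hdp : ∀ l, dpow (vecConst ν ξ) (d l) =
      (ξ / ξ') ^ (∑ μ, d l μ) * dpow (vecConst ν ξ') (d l) := fun l => by
    rw [hq]
    exact dpow_const_mul hq0 fun _ => hξ'.le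
  set q : ι → ℝ := fun l => (ξ / ξ') ^ (∑ μ, d l μ)
  have hqn : ∀ l, 0 ≤ q l := fun l => Real.rpow_nonneg hq0.le _
  have hq1 : ∀ l, q l ≤ 1 := fun l => Real.rpow_le_one hq0.le ((div_le_one hξ').2 hle)
    (Finset.sum_nonneg fun μ _ => hd l μ)
  obtain ⟨g, hgΩ, hg0, hg⟩ := h (fun s l => q l * a s l) ⟨fun l => (ham l).const_mul _, c, hc1, by
    filter_upwards [hc] with s hs
    refine le_trans (Finset.sum_le_sum fun l _ => ?_) hs
    rw [mul_pow]
    exact mul_le_of_le_one_left (sq_nonneg _) (pow_le_one₀ (hqn l) (hq1 l))⟩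
  refine ⟨g, hgΩ, hg0, fun u hu => ?_⟩
  rw [hg u hu]
  congr 2
  ext1 s
  refine Finset.sum_congr rfl fun l _ => ?_
  rw [hdp, smul_smul, smul_smul]
  congr 1
  ring

section MinorSystem

variable {ν n Q : ℕ} {κ : Type*}

/-- The `δ`-dependent part of the coefficients of the linear system for minors. -/
def minorWeight (d : Fin Q → Deg ν) (δ : Fin ν → ℝ) (k : Fin Q) (p : (κ → Fin n) × (κ → Fin Q)) :
    (κ × Fin Q) ⊕ (κ × Fin n) → ℝ
  | Sum.inl t => bracketWeight d δ k (p.2 t.1) t.2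
  | Sum.inr _ => dpow δ (d k)

/-- The smooth part of the coefficients of the linear system for minors. -/
def minorCoeff (X : Fin Q → VF n) (c : Fin Q → Fin Q → Fin Q → Euc n → ℝ) (k : Fin Q)
    (p : (κ → Fin n) × (κ → Fin Q)) : (κ × Fin Q) ⊕ (κ × Fin n) → Euc n → ℝ
  | Sum.inl t => c k (p.2 t.1) t.2
  | Sum.inr t => fun y => fderiv ℝ (X k) y (EuclideanSpace.single t.2 1) (p.1 t.1)

lemma abs_minorWeight_le_one {d : Fin Q → Deg ν} (hd : ∀ l μ, 0 ≤ d l μ) {δ : Fin ν → ℝ}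
    (hδ : δ ∈ unitCube ν) (k : Fin Q) (p : (κ → Fin n) × (κ → Fin Q))
    (t : (κ × Fin Q) ⊕ (κ × Fin n)) : |minorWeight d δ k p t| ≤ 1 := by
  rcases t with t | t
  · have h := bracketWeight_mem_Icc (d := d) hδ k (p.2 t.1) t.2
    exact (abs_of_nonneg h.1).trans_le h.2
  · exact (abs_of_nonneg (dpow_nonneg _ fun μ => (hδ μ).1)).trans_le (dpow_le_one hδ (hd k))

variable {Ω : Set (Euc n)} {X : Fin Q → VF n} {c : Fin Q → Fin Q → Fin Q → Euc n → ℝ}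

lemma contDiffOn_fderiv_entry (hΩ : IsOpen Ω) (hX : ∀ l, ContDiffOn ℝ (⊤ : ℕ∞) (X l) Ω)
    (k : Fin Q) (m i : Fin n) :
    ContDiffOn ℝ (⊤ : ℕ∞) (fun y => fderiv ℝ (X k) y (EuclideanSpace.single m 1) i) Ω :=
  (EuclideanSpace.proj i : Euc n →L[ℝ] ℝ).contDiff.comp_contDiffOn
    (((hX k).fderiv_of_isOpen hΩ (by simp)).clm_apply contDiffOn_const)

lemma contDiffOn_minorCoeff (hΩ : IsOpen Ω) (hX : ∀ l, ContDiffOn ℝ (⊤ : ℕ∞) (X l) Ω)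
    (hc : ∀ k l i, ContDiffOn ℝ (⊤ : ℕ∞) (c k l i) Ω) (k : Fin Q)
    (p : (κ → Fin n) × (κ → Fin Q)) (t : (κ × Fin Q) ⊕ (κ × Fin n)) :
    ContDiffOn ℝ (⊤ : ℕ∞) (minorCoeff X c k p t) Ω := by
  rcases t with t | t
  · exact hc _ _ _
  · exact contDiffOn_fderiv_entry hΩ hX _ _ _

variable [Fintype κ] [DecidableEq κ]

/-- The minors occurring in the derivative of a given minor. -/
def minorShift (p : (κ → Fin n) × (κ → Fin Q)) :
    (κ × Fin Q) ⊕ (κ × Fin n) → (κ → Fin n) × (κ → Fin Q)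
  | Sum.inl t => (p.1, Function.update p.2 t.1 t.2)
  | Sum.inr t => (Function.update p.1 t.1 t.2, p.2)

lemma contDiffOn_scaledMinor (hX : ∀ l, ContDiffOn ℝ (⊤ : ℕ∞) (X l) Ω) (d : Fin Q → Deg ν)
    (δ : Fin ν → ℝ) (I : κ → Fin n) (J : κ → Fin Q) :
    ContDiffOn ℝ (⊤ : ℕ∞) (scaledMinor X d δ I J) Ω := by
  unfold scaledMinor
  simp only [Matrix.det_apply, scaledMat, Matrix.submatrix_apply]
  refine ContDiffOn.sum fun σ _ => ContDiffOn.const_smul _ (contDiffOn_prod fun i _ => ?_)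
  exact contDiffOn_const.mul
    ((EuclideanSpace.proj _ : Euc n →L[ℝ] ℝ).contDiff.comp_contDiffOn (hX _))

lemma fderiv_scaledMinor_eq_sum (hΩ : IsOpen Ω) {d : Fin Q → Deg ν} (hd : ∀ l μ, 0 ≤ d l μ)
    (hX : ∀ l, ContDiffOn ℝ (⊤ : ℕ∞) (X l) Ω)
    (hc0 : ∀ k l i, ¬ (∀ μ, d i μ ≤ d k μ + d l μ) → c k l i = 0)
    (hc : ∀ k l, ∀ y ∈ Ω, lieBracket (X k) (X l) y = ∑ i, c k l i y • X i y)
    {δ : Fin ν → ℝ} (hδ : ∀ μ, 0 ≤ δ μ) (p : (κ → Fin n) × (κ → Fin Q)) (k : Fin Q)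
    {y : Euc n} (hy : y ∈ Ω) :
    dpow δ (d k) * fderiv ℝ (scaledMinor X d δ p.1 p.2) y (X k y) =
      ∑ t, minorWeight d δ k p t * minorCoeff X c k p t y *
        scaledMinor X d δ (minorShift p t).1 (minorShift p t).2 y := by
  rw [fderiv_scaledMinor_apply hΩ hd hX hc0 hc hδ p.1 p.2 k hy, Fintype.sum_sum_type,
    Fintype.sum_prod_type, Fintype.sum_prod_type]
  rfl

lemma scaledMinor_const_mul (X : Fin Q → VF n) (d : Fin Q → Deg ν) {δ : Fin ν → ℝ}
    (hδ : ∀ μ, 0 ≤ δ μ) {t : ℝ} (ht : 0 < t) (I : κ → Fin n) (J : κ → Fin Q) (y : Euc n) :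
    scaledMinor X d (fun μ => t * δ μ) I J y =
      (∏ j, t ^ (∑ μ, d (J j) μ)) * scaledMinor X d δ I J y := by
  unfold scaledMinor
  rw [← Matrix.det_mul_row]
  congr 1
  ext i j
  simp [scaledMat, dpow_const_mul ht hδ, mul_assoc]

end MinorSystem

lemma sum_degree_pos {ν : ℕ} {a : Deg ν} (ha : (∀ μ, 0 ≤ a μ) ∧ a ≠ 0) : 0 < ∑ μ, a μ := by
  obtain ⟨μ, hμ⟩ := Function.ne_iff.1 ha.2
  exact Finset.sum_pos' (fun μ _ => ha.1 μ) ⟨μ, Finset.mem_univ _, (ha.1 μ).lt_of_ne' hμ⟩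

/-- If the minors with columns in `F` are not small at scale `ξδ`, then at scale `δ` some minor
with columns in `F` is comparable to the largest one. -/
lemma exists_dominant_minor {ν n Q : ℕ} {X : Fin Q → VF n} {d : Fin Q → Deg ν}
    (hd : ∀ l μ, 0 ≤ d l μ) (F : Finset (Fin Q)) {ε ξ : ℝ} (hε : 0 < ε) (hε1 : ε ≤ 1) (hξ : 0 < ξ)
    (hξ1 : ξ ≤ 1) {δ : Fin ν → ℝ} (hδ : ∀ μ, 0 ≤ δ μ) {x : Euc n}
    (h : 0 < (scaledMat X d (fun μ => ξ * δ μ) x).rank →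
      (scaledMat X d (fun μ => ξ * δ μ) x).rank ≤ F.card ∧
        ε * maxMinor X d (fun μ => ξ * δ μ) x (scaledMat X d (fun μ => ξ * δ μ) x).rank ≤
          maxMinorSub X d (fun μ => ξ * δ μ) x F (scaledMat X d (fun μ => ξ * δ μ) x).rank) :
    ∃ (r : Fin (n + 1)) (I : Fin r → Fin n) (J : Fin r → F),
      scaledMinor X d δ I (fun j => (J j : Fin Q)) x ≠ 0 ∧
      (∀ (I' : Fin r → Fin n) (J' : Fin r → Fin Q),
        |scaledMinor X d δ I' J' x| ≤ (ε * (ξ ^ (∑ l, ∑ μ, d l μ)) ^ n)⁻¹ *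
        |scaledMinor X d δ I (fun j => (J j : Fin Q)) x|) ∧
      ∀ (I' : Fin r ⊕ Unit → Fin n) (J' : Fin r ⊕ Unit → Fin Q),
        scaledMinor X d δ I' J' x = 0 := by
  set A := scaledMat X d (fun μ => ξ * δ μ) x with hA
  set β := ξ ^ (∑ l, ∑ μ, d l μ) with hβ
  have hβ0 : 0 < β := Real.rpow_pos_of_pos hξ _
  have hd0 : ∀ l, 0 ≤ ∑ μ, d l μ := fun l => Finset.sum_nonneg fun μ _ => hd l μ
  have hβ1 : β ≤ 1 := Real.rpow_le_one hξ.le hξ1 (Finset.sum_nonneg fun l _ => hd0 l)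
  have hrn : A.rank ≤ n := by simpa using A.rank_le_card_height
  have hC0 : 0 < ε * β ^ n := by positivity
  have hprod0 : ∀ {r : ℕ} (J : Fin r → Fin Q), 0 < ∏ j, ξ ^ (∑ μ, d (J j) μ) := fun J =>
    Finset.prod_pos fun j _ => Real.rpow_pos_of_pos hξ _
  have hprod1 : ∀ {r : ℕ} (J : Fin r → Fin Q), ∏ j, ξ ^ (∑ μ, d (J j) μ) ≤ 1 := fun J =>
    Finset.prod_le_one (fun j _ => Real.rpow_nonneg hξ.le _)
      fun j _ => Real.rpow_le_one hξ.le hξ1 (hd0 _)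
  have hprodβ : ∀ {r : ℕ} (J : Fin r → Fin Q), r ≤ n → β ^ n ≤ ∏ j, ξ ^ (∑ μ, d (J j) μ) := by
    intro r J hr
    calc β ^ n ≤ β ^ r := pow_le_pow_of_le_one hβ0.le hβ1 hr
      _ = ∏ _j : Fin r, β := by simp
      _ ≤ _ := Finset.prod_le_prod (fun _ _ => hβ0.le) fun j _ =>
        Real.rpow_le_rpow_of_exponent_ge hξ hξ1
          (Finset.single_le_sum (f := fun l => ∑ μ, d l μ) (fun l _ => hd0 l) (Finset.mem_univ _))
  refine ⟨⟨A.rank, Nat.lt_succ_of_le hrn⟩, ?_⟩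
  have hvanish : ∀ (I' : Fin A.rank ⊕ Unit → Fin n) (J' : Fin A.rank ⊕ Unit → Fin Q),
      scaledMinor X d δ I' J' x = 0 := by
    intro I' J'
    have h1 : scaledMinor X d (fun μ => ξ * δ μ) I' J' x = 0 :=
      det_submatrix_eq_zero_of_rank_lt (by rw [← hA]; simp) I' J'
    rw [scaledMinor_const_mul X d hδ hξ] at h1
    exact (mul_eq_zero.1 h1).resolve_left
      (Finset.prod_pos fun j _ => Real.rpow_pos_of_pos hξ _).ne'
  suffices hex : ∃ (I : Fin A.rank → Fin n) (J : Fin A.rank → F),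
      scaledMinor X d δ I (fun j => (J j : Fin Q)) x ≠ 0 ∧
      ∀ (I' : Fin A.rank → Fin n) (J' : Fin A.rank → Fin Q),
        |scaledMinor X d δ I' J' x| ≤ (ε * β ^ n)⁻¹ *
        |scaledMinor X d δ I (fun j => (J j : Fin Q)) x| by
    obtain ⟨I, J, h1, h2⟩ := hex
    exact ⟨I, J, h1, h2, hvanish⟩
  rcases Nat.eq_zero_or_pos A.rank with h0 | hpos
  · have hone : ∀ (I : Fin A.rank → Fin n) (J : Fin A.rank → Fin Q),
        scaledMinor X d δ I J x = 1 := fun I J => by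
      have : IsEmpty (Fin A.rank) := by rw [h0]; infer_instance
      exact Matrix.det_isEmpty
    have : IsEmpty (Fin A.rank) := by rw [h0]; infer_instance
    refine ⟨isEmptyElim, isEmptyElim, by simp [hone], fun I' J' => ?_⟩
    simp only [hone, abs_one, mul_one]
    exact (one_le_inv₀ hC0).2 (mul_le_one₀ hε1 (by positivity) (pow_le_one₀ hβ0.le hβ1))
  · obtain ⟨hcard, hle⟩ := h hpos
    obtain ⟨I₁, J₁, hne⟩ := exists_submatrix_det_ne_zero (M := A) rfl
    have hbd : ∀ (I' : Fin A.rank → Fin n) (J' : Fin A.rank → Fin Q),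
        |(A.submatrix I' J').det| ≤ maxMinor X d (fun μ => ξ * δ μ) x A.rank := fun I' J' =>
      (le_ciSup (f := fun J' : Fin A.rank → Fin Q => |(A.submatrix I' J').det|)
        (finite_range _).bddAbove J').trans
        (le_ciSup (f := fun I' : Fin A.rank → Fin n => ⨆ J' : Fin A.rank → Fin Q,
          |(A.submatrix I' J').det|) (finite_range _).bddAbove I')
    have : Nonempty F := by
      obtain ⟨l, hl⟩ := Finset.card_pos.1 (hpos.trans_le hcard)
      exact ⟨⟨l, hl⟩⟩
    have : Nonempty (Fin n) := ⟨I₁ ⟨0, hpos⟩⟩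
    obtain ⟨I, hI⟩ := exists_eq_ciSup_of_finite (f := fun I : Fin A.rank → Fin n =>
      ⨆ J : Fin A.rank → F, |(A.submatrix I fun j => (J j : Fin Q)).det|)
    obtain ⟨J, hJ⟩ := exists_eq_ciSup_of_finite (f := fun J : Fin A.rank → F =>
      |(A.submatrix I fun j => (J j : Fin Q)).det|)
    have hIJ : |(A.submatrix I fun j => (J j : Fin Q)).det| =
        maxMinorSub X d (fun μ => ξ * δ μ) x F A.rank := hJ.trans hI
    have hmax : ∀ (I' : Fin A.rank → Fin n) (J' : Fin A.rank → Fin Q), ε * |(A.submatrix I' J').det| ≤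
        |(A.submatrix I fun j => (J j : Fin Q)).det| := fun I' J' =>
      (mul_le_mul_of_nonneg_left (hbd I' J') hε.le).trans (hle.trans_eq hIJ.symm)
    have hdet : ∀ (I' : Fin A.rank → Fin n) (J' : Fin A.rank → Fin Q),
        |(A.submatrix I' J').det| = (∏ j, ξ ^ (∑ μ, d (J' j) μ)) * |scaledMinor X d δ I' J' x| := by
      intro I' J'
      rw [← abs_of_pos (hprod0 J'), ← abs_mul, ← scaledMinor_const_mul X d hδ hξ]
      rfl
    have hmax' : ∀ (I' : Fin A.rank → Fin n) (J' : Fin A.rank → Fin Q), ε * β ^ n * |scaledMinor X d δ I' J' x| ≤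
        |scaledMinor X d δ I (fun j => (J j : Fin Q)) x| := by
      intro I' J'
      have h1 := hmax I' J'
      rw [hdet, hdet] at h1
      calc ε * β ^ n * |scaledMinor X d δ I' J' x|
          = ε * (β ^ n * |scaledMinor X d δ I' J' x|) := mul_assoc _ _ _
        _ ≤ ε * ((∏ j, ξ ^ (∑ μ, d (J' j) μ)) * |scaledMinor X d δ I' J' x|) := by
          gcongr
          exact hprodβ J' hrn
        _ ≤ _ := h1
        _ ≤ _ := mul_le_of_le_one_left (abs_nonneg _) (hprod1 _)
    refine ⟨I, J, fun hz => ?_, fun I' J' => ?_⟩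
    · have h1 := hmax I₁ J₁
      rw [hdet I, hz, abs_zero, mul_zero] at h1
      exact absurd h1 (not_le.2 (mul_pos hε (abs_pos.2 hne)))
    · rw [← div_eq_inv_mul, le_div_iff₀ hC0, mul_comm]
      exact hmax' I' J'

/-- On small Carnot–Carathéodory balls the minors of `δ𝐗` are almost constant. -/
lemma minors_near_of_mem_ccBall {ν n Q : ℕ} {Ω : Set (Euc n)} (hΩ : IsOpen Ω)
    {X : Fin Q → VF n} {d : Fin Q → Deg ν} (hd : ∀ l μ, 0 ≤ d l μ)
    (hX : ∀ l, ContDiffOn ℝ (⊤ : ℕ∞) (X l) Ω) {c : Fin Q → Fin Q → Fin Q → Euc n → ℝ}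
    (hc0 : ∀ k l i, ¬ (∀ μ, d i μ ≤ d k μ + d l μ) → c k l i = 0)
    (hc : ∀ k l, ∀ y ∈ Ω, lieBracket (X k) (X l) y = ∑ i, c k l i y • X i y)
    (F : Finset (Fin Q)) {x : Euc n} {ρ : ℝ} (hρ : 0 ≤ ρ) (hsub : closedBall x ρ ⊆ Ω) {M H : ℝ}
    (hM0 : 0 ≤ M) (hH0 : 0 ≤ H) (hM : ∀ l, ∀ y ∈ closedBall x ρ, ‖X l y‖ ≤ M)
    (hHc : ∀ k l i, ∀ y ∈ closedBall x ρ, |c k l i y| ≤ H)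
    (hHX : ∀ k m i, ∀ y ∈ closedBall x ρ, |fderiv ℝ (X k) y (EuclideanSpace.single m 1) i| ≤ H)
    {ξ η : ℝ} (hξ : 0 < ξ) (hξη : ∀ l, ξ ^ (∑ μ, d l μ) ≤ η) (hη : 0 ≤ η)
    (hηM : F.card * (η * M) < ρ) (hηH : F.card * η * ((n + 1) * (Q + n) * H) ≤ 1 / 2)
    {δ : Fin ν → ℝ} (hδ : δ ∈ unitCube ν) {y : Euc n}
    (hy : y ∈ CCBall (fun j : F => X j) (fun j : F => d j) Ω x (fun μ => ξ * δ μ)) :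
    y ∈ closedBall x ρ ∧ ∀ {κ : Type} [Fintype κ] [DecidableEq κ], Fintype.card κ ≤ n + 1 →
      ∀ {S : ℝ}, (∀ (I : κ → Fin n) (J : κ → Fin Q), |scaledMinor X d δ I J x| ≤ S) →
      ∀ (I : κ → Fin n) (J : κ → Fin Q), |scaledMinor X d δ I J y - scaledMinor X d δ I J x| ≤
        2 * (F.card * η * ((n + 1) * (Q + n) * H)) * S := by
  obtain ⟨g, a, ha, -, ⟨-, hg⟩, rfl⟩ := hy
  have hδ0 : ∀ μ, 0 ≤ δ μ := fun μ => (hδ μ).1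
  have hdp : ∀ l, dpow (fun μ => ξ * δ μ) (d l) = ξ ^ (∑ μ, d l μ) * dpow δ (d l) :=
    fun l => dpow_const_mul hξ hδ0
  set b : F → ℝ := fun l => dpow (fun μ => ξ * δ μ) (d l) with hbdef
  have hb : ∀ l, 0 ≤ b l := fun l => dpow_nonneg _ fun μ => mul_nonneg hξ.le (hδ0 μ)
  have hw : ∀ l, 0 ≤ dpow δ (d l) := fun l => dpow_nonneg _ hδ0
  have hbw : ∀ l : F, b l ≤ η * dpow δ (d l) := fun l => by
    rw [hbdef]
    simp only [hdp]
    exact mul_le_mul_of_nonneg_right (hξη l) (hw l)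
  have hbη : ∀ l : F, b l ≤ η := fun l =>
    (hbw l).trans (mul_le_of_le_one_right hη (dpow_le_one hδ (hd l)))
  have hS0 : ∀ {κ : Type} [Fintype κ] [DecidableEq κ] {S : ℝ} (I : κ → Fin n) (J : κ → Fin Q),
      (∀ (I : κ → Fin n) (J : κ → Fin Q), |scaledMinor X d δ I J x| ≤ S) → 0 ≤ S :=
    fun I J hS => (abs_nonneg _).trans (hS I J)
  by_cases hint : IntervalIntegrable (controlRhs (fun j : F => X j) b a g) volume 0 1
  · have hg' : ∀ u ∈ Icc (0 : ℝ) 1, g u = x + ∫ s in (0 : ℝ)..u,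
        controlRhs (fun j : F => X j) b a g s := hg
    have hmem := integralCurve_mem_closedBall hb ha.ae_abs_le_one hint hg' hρ
      (fun l => hM l) (lt_of_le_of_lt (by
        refine (Finset.sum_le_sum fun l _ => mul_le_mul_of_nonneg_right (hbη l) hM0).trans
          (le_of_eq ?_)
        simp) hηM)
    refine ⟨hmem 1 (by simp), fun {κ} _ _ hκ S hS I J => ?_⟩
    have hT : (Fintype.card ((κ × Fin Q) ⊕ (κ × Fin n)) : ℝ) * H ≤ (n + 1) * (Q + n) * H := by
      have h1 : (Fintype.card κ : ℝ) ≤ n + 1 := by exact_mod_cast hκ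
      simp only [Fintype.card_sum, Fintype.card_prod, Fintype.card_fin]
      push_cast
      rw [← mul_add]
      gcongr
    have hTF : (Fintype.card F : ℝ) * η *
        (Fintype.card ((κ × Fin Q) ⊕ (κ × Fin n)) * H) ≤
          F.card * η * ((n + 1) * (Q + n) * H) := by
      rw [Fintype.card_coe]
      exact mul_le_mul_of_nonneg_left hT (by positivity)
    refine (abs_sub_le_of_linear_system (P := (κ → Fin n) × (κ → Fin Q))
      (v := fun p => scaledMinor X d δ p.1 p.2) (w := fun l : F => dpow δ (d l))
      (A := fun k p t y => minorWeight d δ k p t * minorCoeff X c k p t y)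
      (τ := minorShift) hb (fun l => hw l) hη hbw ha.ae_abs_le_one hint hg'
      (fun l => hM l) hmem hΩ hsub
      (fun p => (contDiffOn_scaledMinor hX d δ p.1 p.2).of_le (by norm_cast)) hH0 ?_
      (fun k p y hy => fderiv_scaledMinor_eq_sum hΩ hd hX hc0 hc hδ0 p k hy)
      (hTF.trans hηH) (fun p => hS p.1 p.2) (I, J) (u := 1) (by simp)).trans ?_
    · intro k p t y hy
      rw [abs_mul]
      refine (mul_le_of_le_one_left (abs_nonneg _) (abs_minorWeight_le_one hd hδ _ _ _)).trans ?_
      rcases t with t | t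
      · exact hHc _ _ _ _ hy
      · exact hHX _ _ _ _ hy
    · exact mul_le_mul_of_nonneg_right (mul_le_mul_of_nonneg_left hTF zero_le_two) (hS0 I J hS)
  · have hx : g 1 = x := by
      rw [hg 1 (by simp)]
      erw [intervalIntegral.integral_undef hint]
      rw [add_zero]
    rw [hx]
    refine ⟨mem_closedBall_self hρ, fun _ _ hS I J => ?_⟩
    rw [sub_self, abs_zero]
    have := hS0 I J hS
    positivity

section ControlCoeff

variable {ν n Q : ℕ} {F : Finset (Fin Q)} {κ : Type*} [Fintype κ] [DecidableEq κ]

/-- Cramer's rule coefficients of `δ^{d_{l₀}} X_{l₀}` along the columns `J` of `δ𝐗`. -/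
def controlCoeff (X : Fin Q → VF n) (d : Fin Q → Deg ν) (δ : Fin ν → ℝ) (I : κ → Fin n) (J : κ → F)
    (l₀ : Fin Q) (l : F) (y : Euc n) : ℝ :=
  ∑ j, if J j = l then scaledMinor X d δ I (Function.update (fun j => (J j : Fin Q)) j l₀) y /
    scaledMinor X d δ I (fun j => (J j : Fin Q)) y else 0

lemma smul_eq_sum_controlCoeff (X : Fin Q → VF n) (d : Fin Q → Deg ν) {δ : Fin ν → ℝ}
    {I : κ → Fin n} {J : κ → F} {y : Euc n}
    (h0 : scaledMinor X d δ I (fun j => (J j : Fin Q)) y ≠ 0)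
    (h : ∀ (I' : κ ⊕ Unit → Fin n) (J' : κ ⊕ Unit → Fin Q), scaledMinor X d δ I' J' y = 0)
    (l₀ : Fin Q) :
    dpow δ (d l₀) • X l₀ y =
      ∑ l : F, controlCoeff X d δ I J l₀ l y • dpow δ (d l) • X l y := by
  have hswap : ∑ l : F, controlCoeff X d δ I J l₀ l y • dpow δ (d l) • X l y =
      ∑ j, (scaledMinor X d δ I (Function.update (fun j => (J j : Fin Q)) j l₀) y /
        scaledMinor X d δ I (fun j => (J j : Fin Q)) y) • dpow δ (d (J j)) • X (J j) y := by
    simp only [controlCoeff, Finset.sum_smul, ite_smul, zero_smul]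
    rw [Finset.sum_comm]
    simp
  rw [hswap]
  ext i
  have h1 := entry_eq_sum_of_bordered_minor_eq_zero (scaledMat X d δ y) I
    (fun j => (J j : Fin Q)) h0 (i := i) (l := l₀) (h _ _)
  simpa [scaledMat, scaledMinor] using h1

variable {Ω : Set (Euc n)} {X : Fin Q → VF n} {d : Fin Q → Deg ν}
  {c : Fin Q → Fin Q → Fin Q → Euc n → ℝ}

lemma exists_derivList_controlCoeff_eqOn (hΩ : IsOpen Ω) (hd : ∀ l μ, 0 ≤ d l μ)
    (hX : ∀ l, ContDiffOn ℝ (⊤ : ℕ∞) (X l) Ω)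
    (hcs : ∀ k l i, ContDiffOn ℝ (⊤ : ℕ∞) (c k l i) Ω)
    (hc0 : ∀ k l i, ¬ (∀ μ, d i μ ≤ d k μ + d l μ) → c k l i = 0)
    (hc : ∀ k l, ∀ y ∈ Ω, lieBracket (X k) (X l) y = ∑ i, c k l i y • X i y)
    (I : κ → Fin n) (J : κ → F) (l₀ : Fin Q) (l : F) (α : List F) :
    ∃ g, QuotientAlgebra Ω
        (fun (p : (κ → Fin n) × (κ → Fin Q)) (θ : unitCube ν) => scaledMinor X d θ p.1 p.2)
        (I, fun j => (J j : Fin Q)) g ∧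
      ∀ θ : unitCube ν, EqOn
        (derivList (fun j : F => X j) (fun j => dpow θ (d j)) α (controlCoeff X d θ I J l₀ l)) (g θ)
        {y ∈ Ω | scaledMinor X d θ I (fun j => (J j : Fin Q)) y ≠ 0} := by
  have hbase : QuotientAlgebra Ω
      (fun (p : (κ → Fin n) × (κ → Fin Q)) (θ : unitCube ν) => scaledMinor X d θ p.1 p.2)
      (I, fun j => (J j : Fin Q)) (fun θ => controlCoeff X d θ I J l₀ l) := by
    refine QuotientAlgebra.sum _ fun j => ?_
    by_cases hj : J j = l
    · simp only [hj, if_true]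
      exact QuotientAlgebra.quotient (I, Function.update (fun j => (J j : Fin Q)) j l₀)
    · simp only [hj, if_false]
      exact QuotientAlgebra.smooth (h := fun _ => 0) contDiffOn_const
  have hv : ∀ (p : (κ → Fin n) × (κ → Fin Q)) (θ : unitCube ν),
      ContDiffOn ℝ (⊤ : ℕ∞) (scaledMinor X d θ p.1 p.2) Ω := fun p θ =>
    contDiffOn_scaledMinor hX d θ p.1 p.2
  exact QuotientAlgebra.exists_derivList_eqOn (X := fun j : F => X j)
    (w := fun (θ : unitCube ν) j => dpow θ (d j))
    (s := fun k p t (θ : unitCube ν) => minorWeight d θ k p t)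
    (h := fun k p t => minorCoeff X c k p t) (τ := minorShift) hΩ (fun l => hX l)
    (fun l => ⟨1, fun θ => (abs_of_nonneg (dpow_nonneg _ fun μ => (θ.2 μ).1)).trans_le
      (dpow_le_one θ.2 (hd l))⟩)
    hv
    (fun k p t => ⟨1, fun θ => abs_minorWeight_le_one hd θ.2 k p t⟩)
    (fun k p t => contDiffOn_minorCoeff hΩ hX hcs k p t)
    (fun k p θ y hy => fderiv_scaledMinor_eq_sum hΩ hd hX hc0 hc (fun μ => (θ.2 μ).1) p k hy)
    hbase α

lemma continuousOn_derivList_controlCoeff (hΩ : IsOpen Ω) (hd : ∀ l μ, 0 ≤ d l μ)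
    (hX : ∀ l, ContDiffOn ℝ (⊤ : ℕ∞) (X l) Ω)
    (hcs : ∀ k l i, ContDiffOn ℝ (⊤ : ℕ∞) (c k l i) Ω)
    (hc0 : ∀ k l i, ¬ (∀ μ, d i μ ≤ d k μ + d l μ) → c k l i = 0)
    (hc : ∀ k l, ∀ y ∈ Ω, lieBracket (X k) (X l) y = ∑ i, c k l i y • X i y)
    (I : κ → Fin n) (J : κ → F) (l₀ : Fin Q) (l : F) (α : List F) {δ : Fin ν → ℝ}
    (hδ : δ ∈ unitCube ν) :
    ContinuousOn
      (derivList (fun j : F => X j) (fun j => dpow δ (d j)) α (controlCoeff X d δ I J l₀ l))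
      {y ∈ Ω | scaledMinor X d δ I (fun j => (J j : Fin Q)) y ≠ 0} := by
  obtain ⟨g, hg, hge⟩ := exists_derivList_controlCoeff_eqOn hΩ hd hX hcs hc0 hc I J l₀ l α
  have hv : ∀ (p : (κ → Fin n) × (κ → Fin Q)) (θ : unitCube ν),
      ContDiffOn ℝ (⊤ : ℕ∞) (scaledMinor X d θ p.1 p.2) Ω := fun p θ =>
    contDiffOn_scaledMinor hX d θ p.1 p.2
  have h := hg.contDiffOn hv ⟨δ, hδ⟩
  exact h.continuousOn.congr (hge ⟨δ, hδ⟩)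

lemma exists_bound_derivList_controlCoeff (hΩ : IsOpen Ω) (hd : ∀ l μ, 0 ≤ d l μ)
    (hX : ∀ l, ContDiffOn ℝ (⊤ : ℕ∞) (X l) Ω)
    (hcs : ∀ k l i, ContDiffOn ℝ (⊤ : ℕ∞) (c k l i) Ω)
    (hc0 : ∀ k l i, ¬ (∀ μ, d i μ ≤ d k μ + d l μ) → c k l i = 0)
    (hc : ∀ k l, ∀ y ∈ Ω, lieBracket (X k) (X l) y = ∑ i, c k l i y • X i y)
    {K : Set (Euc n)} (hK : IsCompact K) (hKΩ : K ⊆ Ω) (C : ℝ)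
    (I : κ → Fin n) (J : κ → F) (l₀ : Fin Q) (l : F) (α : List F) :
    ∃ B, ∀ δ ∈ unitCube ν, ∀ y ∈ K, scaledMinor X d δ I (fun j => (J j : Fin Q)) y ≠ 0 →
      (∀ (I' : κ → Fin n) (J' : κ → Fin Q), |scaledMinor X d δ I' J' y| ≤
        C * |scaledMinor X d δ I (fun j => (J j : Fin Q)) y|) →
      |derivList (fun j : F => X j) (fun j => dpow δ (d j)) α
        (controlCoeff X d δ I J l₀ l) y| ≤ B := by
  obtain ⟨g, hg, hge⟩ := exists_derivList_controlCoeff_eqOn hΩ hd hX hcs hc0 hc I J l₀ l α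
  obtain ⟨B, hB⟩ := hg.bounded hK hKΩ (C := C)
  exact ⟨B, fun δ hδ y hy h0 h => (congrArg abs (hge ⟨δ, hδ⟩ ⟨hKΩ hy, h0⟩)).trans_le
    (hB ⟨δ, hδ⟩ y hy fun p => h p.1 p.2)⟩

end ControlCoeff

lemma exists_rpow_le {ν Q : ℕ} {d : Fin Q → Deg ν} (hd : ∀ l, (∀ μ, 0 ≤ d l μ) ∧ d l ≠ 0) {η ξ₁ : ℝ}
    (hη : 0 < η) (hξ₁ : 0 < ξ₁) :
    ∃ ξ, 0 < ξ ∧ ξ ≤ ξ₁ ∧ ∀ l, ξ ^ (∑ μ, d l μ) ≤ η := by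
  have h1 : ∀ l, ∀ᶠ ξ : ℝ in 𝓝[>] 0, ξ ^ (∑ μ, d l μ) ≤ η := fun l => by
    have h2 : Tendsto (fun ξ : ℝ => ξ ^ (∑ μ, d l μ)) (𝓝[>] 0) (𝓝 0) := by
      have h3 := (Real.continuousAt_rpow_const 0 (∑ μ, d l μ)
        (Or.inr (sum_degree_pos (hd l)).le)).tendsto
      rw [Real.zero_rpow (sum_degree_pos (hd l)).ne'] at h3
      exact h3.mono_left nhdsWithin_le_nhds
    exact (h2.eventually (eventually_lt_nhds hη)).mono fun _ h => h.le
  have h4 : ∀ᶠ ξ : ℝ in 𝓝[>] 0, ξ ∈ Ioc 0 ξ₁ := Ioc_mem_nhdsGT hξ₁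
  obtain ⟨ξ, hξ, h⟩ := (h4.and (eventually_all.2 h1)).exists
  exact ⟨ξ, hξ.1, hξ.2, h⟩

/-- If at every point and every scale some minor of `δ𝐗` with columns in `F` is comparable to the
largest one, of size the rank, then `F` controls every field. -/
lemma controlsPair_of_dominant_minor {ν n Q : ℕ} {Ω : Set (Euc n)} (hΩ : IsOpen Ω)
    {X : Fin Q → VF n} {d : Fin Q → Deg ν} (hd : ∀ l, (∀ μ, 0 ≤ d l μ) ∧ d l ≠ 0)
    (hX : ∀ l, ContDiffOn ℝ (⊤ : ℕ∞) (X l) Ω) {c : Fin Q → Fin Q → Fin Q → Euc n → ℝ}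
    (hcs : ∀ k l i, ContDiffOn ℝ (⊤ : ℕ∞) (c k l i) Ω)
    (hc0 : ∀ k l i, ¬ (∀ μ, d i μ ≤ d k μ + d l μ) → c k l i = 0)
    (hc : ∀ k l, ∀ y ∈ Ω, lieBracket (X k) (X l) y = ∑ i, c k l i y • X i y)
    (F : Finset (Fin Q)) {U : Set (Euc n)} (hU : IsOpen U) (h0U : (0 : Euc n) ∈ U) (hUΩ : U ⊆ Ω)
    {ξ₁ : ℝ} (hξ₁ : 0 < ξ₁)
    (hCF : ∀ x ∈ U, SatC (fun j : F => X j) (fun j : F => d j) x (vecConst ν ξ₁) Ω)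
    {C : ℝ} (hC : 0 ≤ C)
    (hdom : ∀ x ∈ U, ∀ δ ∈ unitCube ν,
      ∃ (r : Fin (n + 1)) (I : Fin r → Fin n) (J : Fin r → F),
        scaledMinor X d δ I (fun j => (J j : Fin Q)) x ≠ 0 ∧
        (∀ (I' : Fin r → Fin n) (J' : Fin r → Fin Q), |scaledMinor X d δ I' J' x| ≤
          C * |scaledMinor X d δ I (fun j => (J j : Fin Q)) x|) ∧
        ∀ (I' : Fin r ⊕ Unit → Fin n) (J' : Fin r ⊕ Unit → Fin Q),
          scaledMinor X d δ I' J' x = 0) (l₀ : Fin Q) :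
    ControlsPair (fun j : F => X j) (fun j : F => d j) Ω (X l₀) (d l₀) := by
  have hd' : ∀ l μ, 0 ≤ d l μ := fun l => (hd l).1
  obtain ⟨ρ, hρ, hρU⟩ : ∃ ρ > 0, closedBall (0 : Euc n) (ρ + ρ) ⊆ U := by
    obtain ⟨ρ, hρ, h⟩ := Metric.nhds_basis_closedBall.mem_iff.1 (hU.mem_nhds h0U)
    exact ⟨ρ / 2, half_pos hρ, by rwa [add_halves]⟩
  set K := closedBall (0 : Euc n) (ρ + ρ)
  have hK : IsCompact K := isCompact_closedBall _ _
  have hKΩ : K ⊆ Ω := hρU.trans hUΩ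
  have hball : ∀ x ∈ ball (0 : Euc n) ρ, closedBall x ρ ⊆ K := fun x hx =>
    closedBall_subset_closedBall' (by rw [mem_ball] at hx; linarith)
  obtain ⟨M, hM0, hM⟩ : ∃ M, 0 ≤ M ∧ ∀ l, ∀ y ∈ K, ‖X l y‖ ≤ M := by
    choose N hN using fun l => hK.exists_bound_of_continuousOn ((hX l).continuousOn.mono hKΩ)
    obtain ⟨M, hM⟩ := (finite_range N).bddAbove
    exact ⟨max M 0, le_max_right _ _, fun l y hy =>
      (hN l y hy).trans ((hM ⟨l, rfl⟩).trans (le_max_left _ _))⟩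
  obtain ⟨H₁, hH₁0, hH₁⟩ : ∃ H, 0 ≤ H ∧ ∀ k l i, ∀ y ∈ K, |c k l i y| ≤ H := by
    choose N hN using fun p : Fin Q × Fin Q × Fin Q =>
      hK.exists_bound_of_continuousOn ((hcs p.1 p.2.1 p.2.2).continuousOn.mono hKΩ)
    obtain ⟨M, hM⟩ := (finite_range N).bddAbove
    exact ⟨max M 0, le_max_right _ _, fun k l i y hy =>
      (hN (k, l, i) y hy).trans ((hM ⟨_, rfl⟩).trans (le_max_left _ _))⟩
  obtain ⟨H₂, hH₂⟩ : ∃ H, ∀ k m i, ∀ y ∈ K,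
      |fderiv ℝ (X k) y (EuclideanSpace.single m 1) i| ≤ H := by
    choose N hN using fun p : Fin Q × Fin n × Fin n =>
      hK.exists_bound_of_continuousOn
        ((contDiffOn_fderiv_entry hΩ hX p.1 p.2.1 p.2.2).continuousOn.mono hKΩ)
    obtain ⟨M, hM⟩ := (finite_range N).bddAbove
    exact ⟨M, fun k m i y hy => (hN (k, m, i) y hy).trans (hM ⟨_, rfl⟩)⟩
  set H := max H₁ H₂
  have hH0 : 0 ≤ H := hH₁0.trans (le_max_left _ _)
  obtain ⟨η, hη, hηM, hηH, hηC⟩ : ∃ η : ℝ, 0 < η ∧ F.card * (η * M) < ρ ∧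
      F.card * η * ((n + 1) * (Q + n) * H) ≤ 1 / 2 ∧
      2 * (F.card * η * ((n + 1) * (Q + n) * H)) * C ≤ 1 / 2 := by
    have hev : ∀ {f : ℝ → ℝ} {b : ℝ}, Continuous f → f 0 = 0 → 0 < b → ∀ᶠ η in 𝓝[>] 0, f η < b :=
      fun hf h0 hb => (hf.continuousAt.tendsto.eventually
        (eventually_lt_nhds (by rwa [h0]))).filter_mono nhdsWithin_le_nhds
    obtain ⟨η, h1, h2, h3, h4⟩ := ((eventually_mem_nhdsWithin (a := (0 : ℝ)) (s := Ioi 0)).and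
      ((hev (f := fun η => F.card * (η * M)) (by fun_prop) (by simp) hρ).and
      ((hev (f := fun η => F.card * η * ((n + 1) * (Q + n) * H)) (by fun_prop) (by simp)
        (one_half_pos (α := ℝ))).and
      (hev (f := fun η => 2 * (F.card * η * ((n + 1) * (Q + n) * H)) * C) (by fun_prop) (by simp)
        (one_half_pos (α := ℝ)))))).exists
    exact ⟨η, h1, h2, h3.le, h4.le⟩
  obtain ⟨ξ, hξ, hξle, hξη⟩ := exists_rpow_le hd hη hξ₁
  have hρsub : ball (0 : Euc n) ρ ⊆ U := fun x hx =>
    hρU (ball_subset_closedBall (ball_subset_ball (by linarith) hx))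
  have hbd : ∀ x ∈ ball (0 : Euc n) ρ, ∀ δ ∈ unitCube ν,
      ∃ q : Σ r : Fin (n + 1), (Fin r → Fin n) × (Fin r → F),
        ∀ y ∈ CCBall (fun j : F => X j) (fun j : F => d j) Ω x (fun μ => ξ * δ μ),
          y ∈ K ∧ scaledMinor X d δ q.2.1 (fun j => (q.2.2 j : Fin Q)) y ≠ 0 ∧
          (∀ (I' : Fin q.1 → Fin n) (J' : Fin q.1 → Fin Q), |scaledMinor X d δ I' J' y| ≤
            (2 * C + 1) * |scaledMinor X d δ q.2.1 (fun j => (q.2.2 j : Fin Q)) y|) ∧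
          ∀ (I' : Fin q.1 ⊕ Unit → Fin n) (J' : Fin q.1 ⊕ Unit → Fin Q),
            scaledMinor X d δ I' J' y = 0 := by
    intro x hx δ hδ
    obtain ⟨r, I, J, hne, hle, hz⟩ := hdom x (hρsub hx) δ hδ
    refine ⟨⟨r, I, J⟩, fun y hy => ?_⟩
    have hxK := hball x hx
    obtain ⟨hyx, hnear⟩ := minors_near_of_mem_ccBall hΩ hd' hX hc0 hc F hρ.le (hxK.trans hKΩ)
      hM0 hH0 (fun l z hz => hM l z (hxK hz))
      (fun k l i z hz => (hH₁ k l i z (hxK hz)).trans (le_max_left _ _))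
      (fun k m i z hz => (hH₂ k m i z (hxK hz)).trans (le_max_right _ _)) hξ hξη hη.le hηM hηH hδ hy
    have hr : (r : ℕ) ≤ n := Nat.lt_succ_iff.1 r.2
    set D := scaledMinor X d δ I (fun j => (J j : Fin Q)) x
    have hD : 0 < |D| := abs_pos.2 hne
    have hnear' : ∀ (I' : Fin r → Fin n) (J' : Fin r → Fin Q),
        |scaledMinor X d δ I' J' y - scaledMinor X d δ I' J' x| ≤ 1 / 2 * |D| := by
      intro I' J'
      refine (hnear (by simp) hle I' J').trans ?_
      rw [← mul_assoc]
      exact mul_le_mul_of_nonneg_right hηC hD.le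
    have hDy : 1 / 2 * |D| ≤ |scaledMinor X d δ I (fun j => (J j : Fin Q)) y| := by
      have h1 := hnear' I fun j => J j
      have h2 := abs_sub_abs_le_abs_sub D (scaledMinor X d δ I (fun j => (J j : Fin Q)) y)
      rw [abs_sub_comm] at h1
      linarith
    refine ⟨hxK hyx, ?_, fun I' J' => ?_, fun I' J' => ?_⟩
    · exact abs_pos.1 (lt_of_lt_of_le (by positivity) hDy)
    · have h1 := hnear' I' J'
      have h2 := hle I' J'
      have h3 := abs_sub_abs_le_abs_sub (scaledMinor X d δ I' J' y) (scaledMinor X d δ I' J' x)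
      calc |scaledMinor X d δ I' J' y| ≤ (2 * C + 1) * (1 / 2 * |D|) := by linarith
        _ ≤ _ := mul_le_mul_of_nonneg_left hDy (by positivity)
    · have h1 := hnear (κ := Fin r ⊕ Unit) (by simp [hr]) (S := 0)
        (fun I' J' => by rw [hz, abs_zero]) I' J'
      rw [hz, sub_zero, mul_zero] at h1
      exact abs_eq_zero.1 (le_antisymm h1 (abs_nonneg _))
  have : Nonempty (Σ r : Fin (n + 1), (Fin r → Fin n) × (Fin r → F)) :=
    ⟨⟨⟨0, n.succ_pos⟩, Fin.elim0, Fin.elim0⟩⟩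
  choose! q hqK hq0 hqC hqz using hbd
  choose B hB using fun (p : Σ r : Fin (n + 1), (Fin r → Fin n) × (Fin r → F)) (l : F)
    (α : List F) => exists_bound_derivList_controlCoeff hΩ hd' hX hcs hc0 hc hK hKΩ (2 * C + 1)
      p.2.1 p.2.2 l₀ l α
  have hmem : ∀ x ∈ ball (0 : Euc n) ρ, ∀ δ ∈ unitCube ν,
      CCBall (fun j : F => X j) (fun j : F => d j) Ω x (fun μ => ξ * δ μ) ⊆
        {y ∈ Ω | scaledMinor X d δ (q x δ).2.1 (fun j => ((q x δ).2.2 j : Fin Q)) y ≠ 0} :=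
    fun x hx δ hδ y hy => ⟨hKΩ (hqK x hx δ hδ y hy), hq0 x hx δ hδ y hy⟩
  refine ⟨ball 0 ρ, ξ, isOpen_ball, mem_ball_self hρ, hρsub.trans hUΩ, hξ,
    fun x hx => Zhang.SatC.mono (d := fun j : F => d j) (fun l => hd' l) hξ hξle (hCF x (hρsub hx)),
    fun x δ l => controlCoeff X d δ (q x δ).2.1 (q x δ).2.2 l₀ l, ?_, ?_, ?_⟩
  · exact fun x hx δ hδ y hy => smul_eq_sum_controlCoeff X d (hq0 x hx δ hδ y hy)
      (hqz x hx δ hδ y hy) l₀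
  · exact fun x hx δ hδ l α => (continuousOn_derivList_controlCoeff hΩ hd' hX hcs hc0 hc _ _ l₀ l α
      hδ).mono (hmem x hx δ hδ)
  · intro m
    have hfin : {α : List F | α.length ≤ m}.Finite := List.finite_length_le F m
    have : Finite {α : List F | α.length ≤ m} := hfin
    obtain ⟨N, hN⟩ := (finite_range fun p : (Σ r : Fin (n + 1), (Fin r → Fin n) × (Fin r → F)) × F ×
      {α : List F | α.length ≤ m} => B p.1 p.2.1 p.2.2).bddAbove
    exact ⟨N, fun x hx δ hδ l α hα y hy => (hB (q x δ) l α δ hδ y (hqK x hx δ hδ y hy)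
      (hq0 x hx δ hδ y hy) (hqC x hx δ hδ y hy)).trans (hN ⟨(q x δ, l, ⟨α, hα⟩), rfl⟩)⟩

/-- Proposition 7.3: if some element of `(𝐗,𝐝)` is not controlled by
`ℱ`, then arbitrarily close to `0`, and for arbitrarily small `δ`, either the rank of
`δ𝐗` exceeds `|ℱ|`, or the `ℱ`-minors are `ε`-small compared with all minors. -/
theorem statement_17 {ν n Q : ℕ}
    (Ω : Set (Euc n)) (hΩ : IsOpen Ω) (h0 : (0 : Euc n) ∈ Ω)
    (X : Fin Q → VF n) (d : Fin Q → Deg ν)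
    (hd : ∀ l, (∀ μ, 0 ≤ d l μ) ∧ d l ≠ 0)
    (hXs : ∀ l, ContDiffOn ℝ (⊤ : ℕ∞) (X l) Ω)
    (hXb : ∀ l m, ∃ C : ℝ, CmSupNormOn m Ω (X l) ≤ C)
    (hbrack : ∀ l k, ∃ (c : Fin Q → Euc n → ℝ) (V : Set (Euc n)),
      IsOpen V ∧ closure Ω ⊆ V ∧ (∀ i, ContDiffOn ℝ (⊤ : ℕ∞) (c i) V) ∧
      (∀ i, ¬ (∀ μ, d i μ ≤ d l μ + d k μ) → c i = 0) ∧
      ∀ x ∈ Ω, lieBracket (X l) (X k) x = ∑ i, c i x • X i x)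
    (F : Finset (Fin Q)) (ξ₁ : ℝ) (hξ₁ : 0 < ξ₁)
    (U : Set (Euc n)) (hU : IsOpen U) (h0U : (0 : Euc n) ∈ U) (hUΩ : U ⊆ Ω)
    (hCF : ∀ x ∈ U, SatC (fun j : F => X j) (fun j : F => d j) x (vecConst ν ξ₁) Ω)
    (hCX : ∀ x ∈ U, SatC X d x (vecConst ν ξ₁) Ω)
    (hnc : ∃ l, ¬ ControlsPair (fun j : F => X j) (fun j : F => d j) Ω (X l) (d l)) :
    ∀ ε : ℝ, 0 < ε → ε ≤ 1 → ∀ ξ : ℝ, 0 < ξ → ξ ≤ 1 →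
    ∀ U' : Set (Euc n), IsOpen U' → (0 : Euc n) ∈ U' → U' ⊆ U →
    ∃ x ∈ U', ∃ δ : Fin ν → ℝ, (∀ μ, 0 ≤ δ μ ∧ δ μ ≤ ξ) ∧
      0 < (scaledMat X d δ x).rank ∧
      (F.card < (scaledMat X d δ x).rank ∨
        ((scaledMat X d δ x).rank ≤ F.card ∧
          maxMinorSub X d δ x F (scaledMat X d δ x).rank <
            ε * maxMinor X d δ x (scaledMat X d δ x).rank)) := by
  intro ε hε hε1 ξ hξ hξ1 U' hU' h0U' hU'U
  by_contra! hcon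
  obtain ⟨l₀, hl₀⟩ := hnc
  refine hl₀ ?_
  choose c V hV hΩV hcV hc0 hc using hbrack
  have hcs : ∀ k l i, ContDiffOn ℝ (⊤ : ℕ∞) (c k l i) Ω := fun k l i =>
    (hcV k l i).mono (subset_closure.trans (hΩV k l))
  have hd' : ∀ l μ, 0 ≤ d l μ := fun l => (hd l).1
  refine controlsPair_of_dominant_minor hΩ hd hXs hcs hc0 hc F hU' h0U' (hU'U.trans hUΩ) hξ₁
    (fun x hx => hCF x (hU'U hx)) (C := (ε * (ξ ^ (∑ l, ∑ μ, d l μ)) ^ n)⁻¹) (by positivity) ?_ l₀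
  intro x hx δ hδ
  refine exists_dominant_minor hd' F hε hε1 hξ hξ1 (fun μ => (hδ μ).1) fun hpos => ?_
  obtain ⟨h1, h2⟩ := hcon x hx (fun μ => ξ * δ μ) (fun μ => ⟨mul_nonneg hξ.le (hδ μ).1,
    mul_le_of_le_one_right hξ.le (hδ μ).2⟩) hpos
  exact ⟨h1, h2 h1⟩
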